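/- Let (R, m) be an analytically unramified Noetherian local ring with conductor ideal 𝔠. If 𝔠 has finite projective dimension as an R-module, then R is normal (i.e. R is reduced and equals its integral closure R̄ in its total ring of fractions; equivalently R_p is an integrally closed domain for every prime ideal p). -/

import Mathlib

open CategoryTheory IsLocalRing

set_option synthInstance.maxHeartbeats 1000000
set_option maxHeartbeats 1000000

noncomputable section

/-- The integral closure `R̄` of `R` in its total ring of fractions, viewed as a type
(with its canonical `R`-algebra and `R`-module structures). -/
abbrev IntClosure (R : Type) [CommRing R] : Type :=
  ↥(integralClosure R (FractionRing R))

/-- The quotient `R`-module `R̄/R`. -/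
abbrev IntClosureQuot (R : Type) [CommRing R] : Type :=
  IntClosure R ⧸ LinearMap.range (Algebra.linearMap R (IntClosure R))

/-- The conductor ideal `𝔠 = Ann_R(R̄/R) = {r : R | r • R̄ ⊆ R}`. -/
def conductorIdeal (R : Type) [CommRing R] : Ideal R :=
  Module.annihilator R (IntClosureQuot R)

/-- A local ring `R` is analytically unramified if its `m`-adic completion is reduced. -/
def AnalyticallyUnramified (R : Type) [CommRing R] [IsLocalRing R] : Prop :=
  IsReduced (AdicCompletion (maximalIdeal R) R)

/-- `R` is normal: it is reduced and equal to its integral closure `R̄` in its total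
ring of fractions. -/
def IsNormalRing (R : Type) [CommRing R] : Prop :=
  IsReduced R ∧ integralClosure R (FractionRing R) = ⊥

/-- `Ext^i_R(M, N)` as a type. -/
abbrev ExtMod (R : Type) [CommRing R] (M : Type) [AddCommGroup M] [Module R M]
    (N : Type) [AddCommGroup N] [Module R N] (i : ℕ) : Type :=
  ↥(((Ext R (ModuleCat.{0} R) i).obj (Opposite.op (ModuleCat.of R M))).obj (ModuleCat.of R N))

/-- `M` has finite projective dimension over `R`:
`Ext^i_R(M, -)` vanishes for all `i` bigger than some `n`. -/
def HasFiniteProjDim (R : Type) [CommRing R] (M : Type) [AddCommGroup M] [Module R M] : Prop :=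
  ∃ n : ℕ, ∀ (N : ModuleCat.{0} R) (i : ℕ), n < i →
    Subsingleton ↥(((Ext R (ModuleCat.{0} R) i).obj (Opposite.op (ModuleCat.of R M))).obj N)

/-- `M` has finite injective dimension over `R`:
`Ext^i_R(-, M)` vanishes for all `i` bigger than some `n`. -/
def HasFiniteInjDim (R : Type) [CommRing R] (M : Type) [AddCommGroup M] [Module R M] : Prop :=
  ∃ n : ℕ, ∀ (N : ModuleCat.{0} R) (i : ℕ), n < i →
    Subsingleton ↥(((Ext R (ModuleCat.{0} R) i).obj (Opposite.op N)).obj (ModuleCat.of R M))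

/-- The depth of an `R`-module `M` over a local ring `(R, m)`: the least `i` such that
`Ext^i_R(R/m, M) ≠ 0` (`⊤` if there is no such `i`), valued in `WithBot (WithTop ℕ)`
for easy comparison with `ringKrullDim`. -/
def moduleDepth (R : Type) [CommRing R] [IsLocalRing R]
    (M : Type) [AddCommGroup M] [Module R M] : WithBot (WithTop ℕ) :=
  sInf { n : WithBot (WithTop ℕ) |
    ∃ i : ℕ, n = (i : ℕ) ∧ Nontrivial (ExtMod R (ResidueField R) M i) }

/-- A Noetherian local ring is Gorenstein if it has finite injective dimension
as a module over itself. -/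
def IsGorensteinLocal (R : Type) [CommRing R] [IsLocalRing R] : Prop :=
  IsNoetherianRing R ∧ HasFiniteInjDim R R

/-- A Noetherian local ring is Cohen–Macaulay if its depth equals its Krull dimension. -/
def IsCohenMacaulayLocal (R : Type) [CommRing R] [IsLocalRing R] : Prop :=
  IsNoetherianRing R ∧ moduleDepth R R = ringKrullDim R

/-- A ring is Cohen–Macaulay if it is Noetherian and all its localizations at primes
are Cohen–Macaulay local rings. -/
def IsCohenMacaulayRing (A : Type) [CommRing A] : Prop :=
  IsNoetherianRing A ∧ ∀ (p : Ideal A) [p.IsPrime],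
    moduleDepth (Localization.AtPrime p) (Localization.AtPrime p) =
      ringKrullDim (Localization.AtPrime p)

/-- Serre's condition `(S2)`: `depth (R_p) ≥ min {2, height p}` for every prime `p`
(`height p` being the dimension of `R_p`). -/
def SerreS2 (R : Type) [CommRing R] : Prop :=
  ∀ (p : Ideal R) [p.IsPrime],
    min 2 (ringKrullDim (Localization.AtPrime p)) ≤
      moduleDepth (Localization.AtPrime p) (Localization.AtPrime p)

/-- A Noetherian local ring is regular if its maximal ideal can be generated by
`dim R` elements. -/
def IsRegularLocal (A : Type) [CommRing A] [IsLocalRing A] : Prop :=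
  IsNoetherianRing A ∧ ∃ s : Finset A, Ideal.span (s : Set A) = maximalIdeal A ∧
    (s.card : WithBot (WithTop ℕ)) = ringKrullDim A

/-- Serre's condition `(R1)`: `R_p` is regular for every prime `p` of height at most `1`. -/
def SerreR1 (R : Type) [CommRing R] : Prop :=
  ∀ (p : Ideal R) [p.IsPrime], ringKrullDim (Localization.AtPrime p) ≤ 1 →
    IsRegularLocal (Localization.AtPrime p)

/-- The `i`-th local cohomology `H^i_m(M)` of `M` with support in the maximal ideal,
as a type. -/
abbrev localCohMod (R : Type) [CommRing R] [IsLocalRing R] (i : ℕ)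
    (M : Type) [AddCommGroup M] [Module R M] : Type :=
  ↥((localCohomology (maximalIdeal R) i).obj (ModuleCat.of R M))

/-- `x : Fin d → R` is a system of parameters for the local ring `(R, m)`:
`d = dim R`, all `x i` lie in `m`, and the ideal they generate is `m`-primary
(its radical is `m`). -/
def IsSystemOfParameters (R : Type) [CommRing R] [IsLocalRing R] {d : ℕ}
    (x : Fin d → R) : Prop :=
  (d : WithBot (WithTop ℕ)) = ringKrullDim R ∧ (∀ i, x i ∈ maximalIdeal R) ∧
    (Ideal.span (Set.range x)).radical = maximalIdeal R

/-- `E` is an injective hull of the residue field of the local ring `R`: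
`E` is injective and contains a copy of `R/m` as an essential submodule. -/
def IsInjectiveHullOfResidueField (R : Type) [CommRing R] [IsLocalRing R]
    (E : Type) [AddCommGroup E] [Module R E] : Prop :=
  Module.Injective R E ∧ ∃ f : ResidueField R →ₗ[R] E, Function.Injective f ∧
    ∀ N : Submodule R E, N ≠ ⊥ → N ⊓ LinearMap.range f ≠ ⊥


theorem isIntegral_of_mem_adjoin_inv' {A K : Type*} [CommRing A] [Field K] [Algebra A K]
    {z : K} (hz : z ∈ Algebra.adjoin A {z⁻¹}) : IsIntegral A z := by
  by_cases h0 : z = 0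
  · subst h0; exact isIntegral_zero
  rw [Algebra.adjoin_singleton_eq_range_aeval] at hz
  obtain ⟨p, hp⟩ := hz
  let N : Submodule A K := Submodule.span A ((fun i : ℕ => z⁻¹ ^ i) '' (Set.Iio (p.natDegree + 1)))
  have hN : ∀ i < p.natDegree + 1, z⁻¹ ^ i ∈ N := fun i hi =>
    Submodule.subset_span ⟨i, hi, rfl⟩
  have hzN : z ∈ N := by
    have : z = Polynomial.aeval z⁻¹ p := hp.symm
    rw [this, Polynomial.aeval_eq_sum_range]
    refine N.sum_mem fun i hi => N.smul_mem _ (hN i (by simpa using hi))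
  refine isIntegral_of_smul_mem_submodule N ?_ ?_ z ?_
  · intro hbot
    have := hN 0 (by omega)
    rw [hbot] at this
    simp at this
  · exact Submodule.fg_span ((Set.finite_Iio _).image _)
  · intro n hn
    induction hn using Submodule.span_induction with
    | mem x hx =>
      obtain ⟨i, hi, rfl⟩ := hx
      cases i with
      | zero => simpa using hzN
      | succ j =>
        have : z • z⁻¹ ^ (j+1) = z⁻¹ ^ j := by
          rw [smul_eq_mul, pow_succ]; field_simp
        simp only [this]
        exact hN j (by simp at hi; omega)
    | zero => simp
    | add x y _ _ hx hy => rw [smul_add]; exact N.add_mem hx hy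
    | smul a x _ hx => rw [smul_comm]; exact N.smul_mem _ hx

theorem L1_aux {A K : Type*} [CommRing A] [IsNoetherianRing A] [Field K] [Algebra A K]
    {z : K} (hz : ¬ IsIntegral A z) {c : A} (hc : algebraMap A K c ≠ 0)
    (h : ∀ k : ℕ, IsIntegral A (algebraMap A K c * z ^ k)) : False := by
  have hz0 : z ≠ 0 := by rintro rfl; exact hz isIntegral_zero
  let T := Algebra.adjoin A {z⁻¹}
  let u : T := ⟨z⁻¹, Algebra.subset_adjoin rfl⟩
  have : IsNoetherianRing T := isNoetherianRing_of_fg ⟨{z⁻¹}, by simp [T]⟩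
  let cT : T := algebraMap A T c
  have hcT : cT ≠ 0 := fun h => hc (by
    have := congrArg (algebraMap T K) h
    simpa [cT, ← IsScalarTower.algebraMap_apply] using this)
  have hu : ¬ IsUnit u := by
    intro hu
    obtain ⟨v, hv⟩ := hu.exists_right_inv
    apply hz
    apply isIntegral_of_mem_adjoin_inv'
    have h1 : z⁻¹ * (v : K) = 1 := congrArg Subtype.val hv
    have h2 : z = v := by field_simp at h1; exact h1.symm
    rw [h2]; nth_rewrite 1 [← h2]; exact v.2
  obtain ⟨P, hP⟩ := Ideal.nonempty_minimalPrimes (I := Ideal.span {u})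
    (by simpa [Ideal.span_singleton_eq_top] using hu)
  have hPp : P.IsPrime := hP.1.1
  have huP : u ∈ P := hP.1.2 (Ideal.mem_span_singleton_self u)
  have hht := Ideal.height_le_one_of_isPrincipal_of_mem_minimalPrimes _ P hP
  -- the multiplicative set
  obtain ⟨N, s, hs, e, hse⟩ : ∃ (N : ℕ) (s : T), s ∉ P ∧ ∃ e : T, s * u ^ N = cT * e := by
    by_contra! hcon
    let M : Submonoid T := P.primeCompl ⊔ Submonoid.powers u
    obtain ⟨P', hP', hle, hdis⟩ := Ideal.exists_le_prime_disjoint (Ideal.span {cT}) M (by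
      rw [Set.disjoint_left]
      rintro w hw hwM
      obtain ⟨s, hs, _, ⟨N, rfl⟩, rfl⟩ := Submonoid.mem_sup.1 hwM
      obtain ⟨e, he⟩ := Ideal.mem_span_singleton'.1 hw
      exact hcon N s hs e (by rw [mul_comm] at he; exact he.symm))
    have hle1 : P' < P := by
      refine lt_of_le_of_ne ?_ ?_
      · intro w hw
        by_contra hwP
        exact Set.disjoint_left.1 hdis hw (Submonoid.mem_sup_left (hwP : w ∈ P.primeCompl))
      · rintro rfl
        exact Set.disjoint_left.1 hdis huP
          (Submonoid.mem_sup_right (Submonoid.mem_powers u))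
    have h0 : (⊥ : Ideal T) < P' := by
      refine bot_lt_iff_ne_bot.2 fun hb => hcT ?_
      have := hle (Ideal.mem_span_singleton_self cT)
      rw [hb] at this; simpa using this
    have i1 := Ideal.height_strict_mono_of_isPrime_of_isPrime hle1
    have i2 := Ideal.height_strict_mono_of_isPrime_of_isPrime h0
    have : P'.height < 1 := i1.trans_le hht
    rw [ENat.lt_one_iff_eq_zero] at this
    rw [this] at i2
    exact not_lt_bot i2
  -- now
  let T' := integralClosure T K
  have hy : IsIntegral T (algebraMap A K c * z ^ (N+1) * (e : K)) :=
    ((h (N+1)).tower_top).mul (isIntegral_algebraMap (x := e))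
  let w : T' := ⟨_, hy⟩
  obtain ⟨Q, hQ, hQP⟩ := Ideal.exists_ideal_over_prime_of_isIntegral_of_isDomain (S := T') P (by
    intro a ha
    have : (algebraMap T T' a : K) = 0 := by rw [ha]; rfl
    have : a = 0 := Subtype.ext this
    rw [this]; exact P.zero_mem)
  apply hs
  rw [← hQP, Ideal.mem_comap]
  have : algebraMap T T' s = algebraMap T T' u * w := by
    apply Subtype.ext
    have h1 : (s : K) * z⁻¹ ^ N = algebraMap A K c * e := congrArg Subtype.val hse
    change (s : K) = z⁻¹ * (algebraMap A K c * z ^ (N+1) * (e : K))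
    have h2 : (s : K) = (algebraMap A K c * e) * z ^ N := by
      rw [← h1, inv_pow]; field_simp
    rw [h2, pow_succ]; field_simp
  rw [this]
  apply Q.mul_mem_right
  rw [← Ideal.mem_comap, hQP]; exact huP

theorem L1 {A K : Type*} [CommRing A] [IsDomain A] [IsNoetherianRing A] [Field K] [Algebra A K]
    [IsFractionRing A K]
    {z : K} (hz : ¬ IsIntegral A z) {c : K} (hc : c ≠ 0) :
    ∃ k : ℕ, ¬ IsIntegral A (c * z ^ k) := by
  by_contra! h
  obtain ⟨a, d, hd, rfl⟩ := IsFractionRing.div_surjective (A := A) c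
  have hd0 : algebraMap A K d ≠ 0 := by
    simpa using nonZeroDivisors.ne_zero hd
  refine L1_aux hz (c := a) (fun h0 => hc (by simp [h0])) fun k => ?_
  have : algebraMap A K a * z ^ k = algebraMap A K d * (algebraMap A K a / algebraMap A K d * z ^ k) := by
    field_simp
  rw [this]
  exact isIntegral_algebraMap.mul (h k)


/-- sections away from `V(m)`. -/
def AgRing (A K : Type*) [CommRing A] [Field K] [Algebra A K] (m : Ideal A) : Subalgebra A K where
  carrier := {w | ∃ n : ℕ, ∀ a ∈ m ^ n, ∃ r : A, algebraMap A K r = algebraMap A K a * w}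
  mul_mem' := by
    rintro w w' ⟨n, hn⟩ ⟨n', hn'⟩
    refine ⟨n + n', fun a ha => ?_⟩
    rw [pow_add] at ha
    induction ha using Submodule.mul_induction_on' with
    | mem_mul_mem a ha b hb =>
      obtain ⟨r, hr⟩ := hn a ha
      obtain ⟨r', hr'⟩ := hn' b hb
      exact ⟨r * r', by rw [map_mul, map_mul, hr, hr']; ring⟩
    | add a _ b _ ha hb =>
      obtain ⟨r, hr⟩ := ha
      obtain ⟨r', hr'⟩ := hb
      exact ⟨r + r', by rw [map_add, map_add, hr, hr']; ring⟩
  add_mem' := by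
    rintro w w' ⟨n, hn⟩ ⟨n', hn'⟩
    refine ⟨max n n', fun a ha => ?_⟩
    obtain ⟨r, hr⟩ := hn a (Ideal.pow_le_pow_right (le_max_left _ _) ha)
    obtain ⟨r', hr'⟩ := hn' a (Ideal.pow_le_pow_right (le_max_right _ _) ha)
    exact ⟨r + r', by rw [map_add, hr, hr']; ring⟩
  algebraMap_mem' := fun s => ⟨0, fun a _ => ⟨a * s, map_mul _ _ _⟩⟩

/-- integral elements of `AgRing`. -/
def CRing (A K : Type*) [CommRing A] [Field K] [Algebra A K] (m : Ideal A) : Subalgebra A K :=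
  integralClosure A K ⊓ AgRing A K m

/-- colon set -/
def QSet (A : Type*) {K : Type*} [CommRing A] [Field K] [Algebra A K] (z : K) : Set K :=
  {b | IsIntegral A b ∧ IsIntegral A (b * z)}

/-- colon is prime -/
def PrimeAt (A : Type*) {K : Type*} [CommRing A] [Field K] [Algebra A K] (z : K) : Prop :=
  ∀ b b' : K, IsIntegral A b → IsIntegral A b' → IsIntegral A (b * b' * z) →
    IsIntegral A (b * z) ∨ IsIntegral A (b' * z)

theorem exists_denom {A K : Type*} [CommRing A] [IsDomain A] [Field K] [Algebra A K]
    [IsFractionRing A K] (N : Submodule A K) (hN : N.FG) :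
    ∃ c : A, c ≠ 0 ∧ ∀ w ∈ N, ∃ r : A, algebraMap A K r = algebraMap A K c * w := by
  obtain ⟨s, rfl⟩ := hN
  obtain ⟨c, hc⟩ := IsLocalization.exist_integer_multiples_of_finset (nonZeroDivisors A) s
  refine ⟨c, nonZeroDivisors.ne_zero c.2, fun w hw => ?_⟩
  induction hw using Submodule.span_induction with
  | mem x hx =>
    obtain ⟨r, hr⟩ := hc x hx
    exact ⟨r, by rw [hr, Algebra.smul_def]⟩
  | zero => exact ⟨0, by simp⟩
  | add x y _ _ hx hy =>
    obtain ⟨r, hr⟩ := hx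
    obtain ⟨r', hr'⟩ := hy
    exact ⟨r + r', by rw [map_add, hr, hr']; ring⟩
  | smul a x _ hx =>
    obtain ⟨r, hr⟩ := hx
    exact ⟨a * r, by rw [map_mul, hr, Algebra.smul_def]; ring⟩

theorem core_t {A K : Type*} [CommRing A] [IsDomain A] [IsNoetherianRing A] [Field K] [Algebra A K]
    [IsFractionRing A K] (m : Ideal A) {z b : K} (hz : ¬ IsIntegral A z)
    (hmz : ∀ a ∈ m, IsIntegral A (algebraMap A K a * z)) (hb : IsIntegral A b) :
    ∃ t ∈ CRing A K m, t * b ∈ CRing A K m ∧ ¬ IsIntegral A (t * z) ∧ t * z ∈ AgRing A K m := by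
  obtain ⟨g, hg⟩ := (isNoetherianRing_iff_ideal_fg A).1 inferInstance m
  let G : Set K := insert b ((fun a => algebraMap A K a * z) '' (g : Set A))
  have hGfin : G.Finite := ((g.finite_toSet).image _).insert _
  have hGint : ∀ w ∈ G, IsIntegral A w := by
    rintro w (rfl | ⟨a, ha, rfl⟩)
    · exact hb
    · exact hmz a (hg ▸ Ideal.subset_span ha)
  have hSfg : (Algebra.adjoin A G).toSubmodule.FG := fg_adjoin_of_finite hGfin hGint
  have hbS : b ∈ Algebra.adjoin A G := Algebra.subset_adjoin (Set.mem_insert _ _)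
  have hmS : ∀ a ∈ m, algebraMap A K a * z ∈ Algebra.adjoin A G := by
    intro a ha
    rw [← hg] at ha
    induction ha using Submodule.span_induction with
    | mem x hx => exact Algebra.subset_adjoin (Set.mem_insert_of_mem _ ⟨x, hx, rfl⟩)
    | zero => simp
    | add x y _ _ hx hy => rw [map_add, add_mul]; exact add_mem hx hy
    | smul a x _ hx =>
      rw [smul_eq_mul, map_mul, mul_assoc]
      exact mul_mem (Subalgebra.algebraMap_mem _ _) hx
  have hmS' : ∀ k : ℕ, ∀ a ∈ m ^ k, algebraMap A K a * z ^ k ∈ Algebra.adjoin A G := by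
    intro k
    induction k with
    | zero => intro a _; simp
    | succ k ih =>
      intro a ha
      rw [pow_succ] at ha
      induction ha using Submodule.mul_induction_on' with
      | mem_mul_mem a ha b hb =>
        have := mul_mem (ih a ha) (hmS b hb)
        convert this using 1
        rw [map_mul]; ring
      | add a _ b _ ha hb => rw [map_add, add_mul]; exact add_mem ha hb
  obtain ⟨c, hc0, hc⟩ := exists_denom _ hSfg
  have hcK : algebraMap A K c ≠ 0 := by simpa using hc0
  have hAg : ∀ s ∈ Algebra.adjoin A G, ∀ k, algebraMap A K c * z ^ k * s ∈ AgRing A K m := by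
    intro s hs k
    refine ⟨k, fun a ha => ?_⟩
    obtain ⟨r, hr⟩ := hc (algebraMap A K a * z ^ k * s)
      (show _ ∈ Algebra.adjoin A G from mul_mem (hmS' k a ha) hs)
    exact ⟨r, by rw [hr]; ring⟩
  classical
  have hex := L1 (A := A) hz hcK
  set k := Nat.find hex with hk
  have hk1 : ¬ IsIntegral A (algebraMap A K c * z ^ k) := Nat.find_spec hex
  have hk0 : k ≠ 0 := by
    intro h0
    rw [h0] at hk1
    exact hk1 (by simpa using isIntegral_algebraMap)
  obtain ⟨j, hj⟩ := Nat.exists_eq_succ_of_ne_zero hk0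
  have hj1 : IsIntegral A (algebraMap A K c * z ^ j) := by
    by_contra hcon
    exact Nat.find_min hex (m := j) (by omega) hcon
  have hAg1 : ∀ k, algebraMap A K c * z ^ k ∈ AgRing A K m := fun k => by
    simpa using hAg 1 (one_mem _) k
  refine ⟨algebraMap A K c * z ^ j, ⟨hj1, hAg1 j⟩, ⟨hj1.mul hb, hAg b hbS j⟩, ?_, ?_⟩
  · rw [hj, Nat.succ_eq_add_one, pow_succ, ← mul_assoc] at hk1; exact hk1
  · have := hAg1 (j+1)
    rwa [pow_succ, ← mul_assoc] at this

theorem L_iv {A K : Type*} [CommRing A] [IsDomain A] [IsNoetherianRing A] [Field K] [Algebra A K]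
    [IsFractionRing A K] (m : Ideal A) {z : K} (hz : ¬ IsIntegral A z)
    (hmz : ∀ a ∈ m, IsIntegral A (algebraMap A K a * z)) {x : A} (hx : x ∈ m) (hx0 : x ≠ 0) :
    ∃ r : A, r ∉ Ideal.span {x} ∧ ∀ a ∈ m, a * r ∈ Ideal.span {x} := by
  obtain ⟨t, -, -, ht, ⟨n, hn⟩⟩ := core_t m hz hmz (isIntegral_one (R := A) (B := K))
  have hw : ¬ ∃ r : A, algebraMap A K r = t * z := by
    rintro ⟨r, hr⟩; exact ht (hr ▸ isIntegral_algebraMap)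
  generalize t * z = w at hn hw
  clear ht
  have hxK : algebraMap A K x ≠ 0 := by simpa using hx0
  induction n generalizing w with
  | zero =>
    obtain ⟨r, hr⟩ := hn 1 (by simp)
    exact absurd ⟨r, by simpa using hr⟩ hw
  | succ n ih =>
    by_cases h : ∀ a ∈ m, ∃ r : A, algebraMap A K r = algebraMap A K a * w
    · obtain ⟨r, hr⟩ := h x hx
      refine ⟨r, fun hrx => hw ?_, fun a ha => ?_⟩
      · obtain ⟨e, rfl⟩ := Ideal.mem_span_singleton'.1 hrx
        refine ⟨e, mul_left_cancel₀ hxK ?_⟩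
        rw [← hr, map_mul, mul_comm]
      · obtain ⟨e, he⟩ := h a ha
        refine Ideal.mem_span_singleton'.2 ⟨e, IsFractionRing.injective A K ?_⟩
        rw [map_mul, he, map_mul, hr]; ring
    · push Not at h
      obtain ⟨a, ha, hra⟩ := h
      refine ih (algebraMap A K a * w) (fun b hb => ?_) (by push Not; exact hra)
      obtain ⟨r, hr⟩ := hn (b * a) (by rw [pow_succ]; exact Ideal.mul_mem_mul hb ha)
      exact ⟨r, by rw [hr, map_mul]; ring⟩


theorem isArtinian_of_pow_smul {A M : Type*} [CommRing A] [IsLocalRing A] [IsNoetherianRing A]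
    [AddCommGroup M] [Module A M] [Module.Finite A M] (n : ℕ)
    (h : ∀ a ∈ IsLocalRing.maximalIdeal A ^ n, ∀ x : M, a • x = 0) : IsArtinian A M := by
  let I := IsLocalRing.maximalIdeal A ^ n
  have hT : Module.IsTorsionBySet A M (I : Set A) := by
    intro x a; exact h a a.2 x
  let _ := hT.module
  by_cases hI : I = ⊤
  · have : Subsingleton M := by
      refine ⟨fun x y => ?_⟩
      have := fun x : M => h 1 (by change (1:A) ∈ I; rw [hI]; trivial) x
      simp only [one_smul] at this
      rw [this x, this y]
    infer_instance
  have : Nontrivial (A ⧸ I) := Ideal.Quotient.nontrivial_iff.2 hI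
  have : IsLocalRing (A ⧸ I) := .of_surjective' (Ideal.Quotient.mk I) Ideal.Quotient.mk_surjective
  have : IsArtinianRing (A ⧸ I) := by
    rw [isArtinianRing_iff_isNilpotent_maximalIdeal]
    refine ⟨n, ?_⟩
    have := (IsLocalRing.map_maximalIdeal_of_surjective (Ideal.Quotient.mk I) Ideal.Quotient.mk_surjective)
    rw [← this, ← Ideal.map_pow]
    exact Ideal.map_quotient_self I
  have : Module.Finite (A ⧸ I) M := Module.Finite.of_restrictScalars_finite A _ _
  have : IsArtinian (A ⧸ I) M := inferInstance
  exact isArtinian_of_surjective_algebraMap (S := A) (Ideal.Quotient.mk_surjective (I := I))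
  

theorem matij {A K : Type*} [CommRing A] [IsDomain A] [IsLocalRing A] [IsNoetherianRing A]
    [Field K] [Algebra A K] [IsFractionRing A K] {x : A} (hx : x ∈ IsLocalRing.maximalIdeal A)
    (hx0 : x ≠ 0) :
    ∃ N : ℕ, ∀ w ∈ CRing A K (IsLocalRing.maximalIdeal A),
      ∃ w' ∈ CRing A K (IsLocalRing.maximalIdeal A), ∃ r : A,
        algebraMap A K r = algebraMap A K x ^ N * (w - algebraMap A K x * w') := by
  set m := IsLocalRing.maximalIdeal A
  set C := CRing A K m
  have hxK : algebraMap A K x ≠ 0 := by simpa using hx0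
  have hinj := IsFractionRing.injective A K
  have hCA : ∀ a : A, algebraMap A K a ∈ C := fun a => Subalgebra.algebraMap_mem _ a
  let T : Ideal A :=
    { carrier := {a | ∃ v ∈ AgRing A K m, algebraMap A K a = algebraMap A K x * v}
      add_mem' := by
        rintro a b ⟨v, hv, h⟩ ⟨v', hv', h'⟩
        exact ⟨v + v', add_mem hv hv', by rw [map_add, h, h']; ring⟩
      zero_mem' := ⟨0, zero_mem _, by simp⟩
      smul_mem' := by
        rintro a b ⟨v, hv, h⟩
        exact ⟨algebraMap A K a * v, mul_mem (Subalgebra.algebraMap_mem _ a) hv, by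
          rw [smul_eq_mul, map_mul, h]; ring⟩ }
  let J : ℕ → Ideal A := fun n =>
    { carrier := {a | ∃ w ∈ C, ∃ e : A,
        algebraMap A K a = algebraMap A K x ^ n * w + algebraMap A K x * algebraMap A K e}
      add_mem' := by
        rintro a b ⟨v, hv, e, h⟩ ⟨v', hv', e', h'⟩
        exact ⟨v + v', add_mem hv hv', e + e', by rw [map_add, h, h', map_add]; ring⟩
      zero_mem' := ⟨0, zero_mem _, 0, by simp⟩
      smul_mem' := by
        rintro a b ⟨v, hv, e, h⟩
        exact ⟨algebraMap A K a * v, mul_mem (hCA a) hv, a * e, by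
          rw [smul_eq_mul, map_mul, h, map_mul]; ring⟩ }
  have hJanti : ∀ n k, J (n + k) ≤ J n := by
    rintro n k a ⟨w, hw, e, h⟩
    exact ⟨algebraMap A K x ^ k * w, mul_mem (pow_mem (hCA x) _) hw, e, by rw [h]; ring⟩
  have hJT : ∀ n, J (n + 1) ≤ T := by
    rintro n a ⟨w, hw, e, h⟩
    exact ⟨algebraMap A K x ^ n * w + algebraMap A K e,
      add_mem (mul_mem (pow_mem (hCA x) _) hw).2 (hCA e).2, by rw [h]; ring⟩
  have hxJ : ∀ n, Ideal.span {x} ≤ J n := by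
    intro n a ha
    obtain ⟨e, rfl⟩ := Ideal.mem_span_singleton'.1 ha
    exact ⟨0, zero_mem _, e, by rw [map_mul]; ring⟩
  obtain ⟨L, hL⟩ : ∃ L : ℕ, ∀ a ∈ m ^ L, ∀ t ∈ T, a * t ∈ Ideal.span {x} := by
    have h1 : ∀ t ∈ T, ∃ n : ℕ, ∀ a ∈ m ^ n, a * t ∈ Ideal.span {x} := by
      rintro t ⟨v, ⟨n, hn⟩, hv⟩
      refine ⟨n, fun a ha => ?_⟩
      obtain ⟨r, hr⟩ := hn a ha
      refine Ideal.mem_span_singleton'.2 ⟨r, hinj ?_⟩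
      rw [map_mul, map_mul, hr, hv]; ring
    choose! n hn using h1
    obtain ⟨g, hg⟩ := (isNoetherianRing_iff_ideal_fg A).1 inferInstance T
    refine ⟨g.sup n, fun a ha t ht => ?_⟩
    rw [← hg] at ht
    induction ht using Submodule.span_induction with
    | mem t ht =>
      exact hn t (hg ▸ Ideal.subset_span ht) a (Ideal.pow_le_pow_right (Finset.le_sup ht) ha)
    | zero => simp
    | add s t _ _ hs ht => rw [mul_add]; exact add_mem hs ht
    | smul b t _ ht => rw [smul_eq_mul, mul_left_comm]; exact Ideal.mul_mem_left _ _ ht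
  let T' : Submodule A (A ⧸ Ideal.span {x}) := Submodule.map (Submodule.mkQ _) T
  have : IsArtinian A T' := by
    refine isArtinian_of_pow_smul L fun a ha t => ?_
    obtain ⟨_, t, ht, rfl⟩ := t
    apply Subtype.ext
    change a • Submodule.Quotient.mk t = 0
    rw [← Submodule.Quotient.mk_smul, Submodule.Quotient.mk_eq_zero]
    exact hL a ha t ht
  let f : ℕ →o (Submodule A T')ᵒᵈ :=
    ⟨fun n => OrderDual.toDual (Submodule.comap T'.subtype (Submodule.map (Submodule.mkQ _) (J (n+1)))), by
      intro n n' hn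
      obtain ⟨k, rfl⟩ := Nat.exists_eq_add_of_le hn
      change Submodule.comap T'.subtype (Submodule.map (Submodule.mkQ _) (J (n+k+1))) ≤
        Submodule.comap T'.subtype (Submodule.map (Submodule.mkQ _) (J (n+1)))
      refine Submodule.comap_mono (Submodule.map_mono ?_)
      rw [show n + k + 1 = n + 1 + k by ring]
      exact hJanti _ _⟩
  obtain ⟨N, hN⟩ := IsArtinian.monotone_stabilizes f
  have hstab : ∀ M, N ≤ M → J (N+1) ≤ J (M+1) := by
    intro M hM a ha
    have h1 : (⟨Submodule.mkQ _ a, Submodule.mem_map_of_mem (hJT N ha)⟩ : T') ∈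
        OrderDual.ofDual (f N) := by
      change Submodule.mkQ (Ideal.span {x}) a ∈ Submodule.map (Submodule.mkQ (Ideal.span {x})) (J (N+1))
      exact Submodule.mem_map_of_mem ha
    rw [hN M hM] at h1
    obtain ⟨a', ha', h2⟩ : Submodule.mkQ _ a ∈ Submodule.map (Submodule.mkQ _) (J (M+1)) := h1
    have h3 : a' - a ∈ Ideal.span {x} := (Submodule.Quotient.eq _).1 h2
    have := sub_mem ha' (hxJ (M+1) h3)
    simpa using this
  refine ⟨N, ?_⟩
  have key : ∀ k, ∀ w ∈ C, (∃ r : A, algebraMap A K r = algebraMap A K x ^ (N + k) * w) →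
      ∃ w' ∈ C, ∃ r : A,
        algebraMap A K r = algebraMap A K x ^ N * (w - algebraMap A K x * w') := by
    intro k
    induction k with
    | zero =>
      rintro w hw ⟨r, hr⟩
      exact ⟨0, zero_mem _, r, by rw [hr]; ring⟩
    | succ k ih =>
      rintro w hw ⟨r, hr⟩
      have h1 : r ∈ J (N + k + 1) := ⟨w, hw, 0, by rw [hr, map_zero]; ring⟩
      have h2 : r ∈ J (N + 1) := hJanti (N+1) k (by rwa [show N + 1 + k = N + k + 1 by ring])
      obtain ⟨w', hw', e, he⟩ := hstab (N+k+1) (by omega) h2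
      have h3 : w - algebraMap A K x * w' ∈ C := sub_mem hw (mul_mem (hCA x) hw')
      obtain ⟨w'', hw'', r', hr'⟩ := ih _ h3 ⟨e, by
        apply mul_left_cancel₀ hxK
        have : algebraMap A K x * algebraMap A K e = algebraMap A K r - algebraMap A K x ^ (N + k + 1 + 1) * w' := by
          rw [he]; ring
        rw [this, hr]; ring⟩
      exact ⟨w' + w'', add_mem hw' hw'', r', by rw [hr']; ring⟩
  intro w hw
  obtain ⟨n, hn⟩ := hw.2
  obtain ⟨r, hr⟩ := hn (x ^ n) (Ideal.pow_mem_pow hx n)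
  refine key n w hw ⟨x ^ N * r, by rw [map_mul, hr, map_pow, map_pow]; ring⟩

/-- finite generation of `C` modulo `x`. -/
theorem matij_fg {A K : Type*} [CommRing A] [IsDomain A] [IsLocalRing A] [IsNoetherianRing A]
    [Field K] [Algebra A K] [IsFractionRing A K] {x : A} (hx : x ∈ IsLocalRing.maximalIdeal A)
    (hx0 : x ≠ 0) :
    ∃ F : Submodule A K, F.FG ∧ (∀ f ∈ F, f ∈ CRing A K (IsLocalRing.maximalIdeal A)) ∧
      ∀ w ∈ CRing A K (IsLocalRing.maximalIdeal A), ∃ f ∈ F,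
      ∃ w' ∈ CRing A K (IsLocalRing.maximalIdeal A), w = f + algebraMap A K x * w' := by
  obtain ⟨N, hN⟩ := matij (K := K) hx hx0
  have hxK : algebraMap A K x ≠ 0 := by simpa using hx0
  let D : Submodule A K := Submodule.span A {(algebraMap A K x ^ N)⁻¹}
  have : IsNoetherian A D := isNoetherian_of_fg_of_noetherian _ (Submodule.fg_span_singleton _)
  refine ⟨D ⊓ (CRing A K (IsLocalRing.maximalIdeal A)).toSubmodule, ?_, fun f hf => hf.2, ?_⟩
  · exact Submodule.FG.of_le (Submodule.fg_span_singleton _) inf_le_left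
  · intro w hw
    obtain ⟨w', hw', r, hr⟩ := hN w hw
    have hC : w - algebraMap A K x * w' ∈ CRing A K (IsLocalRing.maximalIdeal A) :=
      sub_mem hw (mul_mem (Subalgebra.algebraMap_mem _ _) hw')
    refine ⟨w - algebraMap A K x * w', ⟨?_, hC⟩, w', hw', by ring⟩
    refine Submodule.mem_span_singleton.2 ⟨r, ?_⟩
    rw [Algebra.smul_def, hr]; field_simp

open IsLocalRing

theorem CRing_int {A K : Type*} [CommRing A] [Field K] [Algebra A K] (m : Ideal A) :
    Algebra.IsIntegral A (CRing A K m) :=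
  ⟨fun c => (isIntegral_algHom_iff (CRing A K m).val Subtype.val_injective).1 c.2.1⟩

theorem CRing_max {A K : Type*} [CommRing A] [IsLocalRing A] [Field K] [Algebra A K]
    (q : Ideal (CRing A K (maximalIdeal A))) [hq : q.IsPrime]
    (h : ∀ a ∈ maximalIdeal A, algebraMap A (CRing A K (maximalIdeal A)) a ∈ q) :
    q.comap (algebraMap A (CRing A K (maximalIdeal A))) = maximalIdeal A ∧ q.IsMaximal := by
  have := CRing_int (K := K) (maximalIdeal A)
  have h1 : q.comap (algebraMap A (CRing A K (maximalIdeal A))) = maximalIdeal A := by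
    symm
    exact (maximalIdeal.isMaximal A).eq_of_le (Ideal.IsPrime.ne_top inferInstance) h
  refine ⟨h1, Ideal.isMaximal_of_isIntegral_of_isMaximal_comap (R := A) q ?_⟩
  rw [h1]; infer_instance

/-- The prime of `C` attached to `z`. -/
def qIdeal {A K : Type*} [CommRing A] [Field K] [Algebra A K] (m : Ideal A) (z : K) :
    Ideal (CRing A K m) where
  carrier := {c | IsIntegral A ((c : K) * z)}
  add_mem' := by
    intro a b ha hb
    simp only [Set.mem_ofPred_eq, AddMemClass.coe_add, add_mul] at *
    exact ha.add hb
  zero_mem' := by simpa using isIntegral_zero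
  smul_mem' := by
    intro a b hb
    simp only [Set.mem_ofPred_eq, smul_eq_mul, MulMemClass.coe_mul, mul_assoc] at *
    exact a.2.1.mul hb

theorem qIdeal_prime {A K : Type*} [CommRing A] [Field K] [Algebra A K] (m : Ideal A) {z : K}
    (hz : ¬ IsIntegral A z) (hP : PrimeAt A z) : (qIdeal m z).IsPrime where
  ne_top' := fun h => hz (by
    have : (1 : CRing A K m) ∈ qIdeal m z := h ▸ trivial
    have h2 : IsIntegral A ((1 : K) * z) := this
    rwa [one_mul] at h2)
  mem_or_mem' := by
    intro a b hab
    exact hP a b a.2.1 b.2.1 hab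

theorem qIdeal_max {A K : Type*} [CommRing A] [IsLocalRing A] [Field K] [Algebra A K] {z : K}
    (hz : ¬ IsIntegral A z) (hmz : ∀ a ∈ maximalIdeal A, IsIntegral A (algebraMap A K a * z))
    (hP : PrimeAt A z) : (qIdeal (maximalIdeal A) z).comap
      (algebraMap A (CRing A K (maximalIdeal A))) = maximalIdeal A ∧
      (qIdeal (maximalIdeal A) z).IsMaximal := by
  have := qIdeal_prime (maximalIdeal A) hz hP
  exact CRing_max _ fun a ha => hmz a ha

section
variable {A K : Type*} [CommRing A] [IsDomain A] [IsLocalRing A] [IsNoetherianRing A]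
    [Field K] [Algebra A K] [IsFractionRing A K]

theorem local_decomp {z : K} (hz : ¬ IsIntegral A z)
    (hmz : ∀ a ∈ maximalIdeal A, IsIntegral A (algebraMap A K a * z))
    (hP : PrimeAt A z) {b : K} (hb : IsIntegral A b) :
    ∃ c ∈ CRing A K (maximalIdeal A), IsIntegral A ((b - c) * z) := by
  obtain ⟨t, htC, htbC, htz, -⟩ := core_t (maximalIdeal A) hz hmz hb
  have hmax := (qIdeal_max hz hmz hP).2
  obtain ⟨s, i, hi, hsi⟩ := hmax.exists_inv (x := ⟨t, htC⟩) htz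
  have hsi' : (s : K) * t + i = 1 := congrArg Subtype.val hsi
  refine ⟨s * (t * b), mul_mem s.2 htbC, ?_⟩
  have : (b - s * (t * b)) * z = b * (i * z) := by
    rw [← eq_sub_iff_add_eq'] at hsi'
    rw [hsi']; ring
  rw [this]
  exact hb.mul hi

theorem local_fg {z : K} (hz : ¬ IsIntegral A z)
    (hmz : ∀ a ∈ maximalIdeal A, IsIntegral A (algebraMap A K a * z))
    (hP : PrimeAt A z) {x : A} (hx : x ∈ maximalIdeal A) (hx0 : x ≠ 0) :
    ∃ F : Submodule A K, F.FG ∧ (∀ f ∈ F, IsIntegral A f) ∧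
      ∀ b, IsIntegral A b → ∃ f ∈ F, IsIntegral A ((b - f) * z) := by
  obtain ⟨F, hF, hFC, h⟩ := matij_fg (K := K) hx hx0
  refine ⟨F, hF, fun f hf => (hFC f hf).1, fun b hb => ?_⟩
  obtain ⟨c, hc, hcz⟩ := local_decomp hz hmz hP hb
  obtain ⟨f, hf, w, hw, rfl⟩ := h c hc
  refine ⟨f, hf, ?_⟩
  have : (b - f) * z = (b - (f + algebraMap A K x * w)) * z + w * (algebraMap A K x * z) := by ring
  rw [this]
  exact hcz.add (hw.1.mul (hmz x hx))

theorem CRing_quot_finite {x : A} (hx : x ∈ maximalIdeal A) (hx0 : x ≠ 0) :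
    Module.Finite A (CRing A K (maximalIdeal A) ⧸
      Ideal.span {algebraMap A (CRing A K (maximalIdeal A)) x}) := by
  obtain ⟨F, hF, hFC, h⟩ := matij_fg (K := K) hx hx0
  let C := CRing A K (maximalIdeal A)
  let I : Ideal C := Ideal.span {algebraMap A C x}
  let g : F →ₗ[A] C := F.subtype.codRestrict C.toSubmodule (fun f => hFC f f.2)
  have : Module.Finite A F := Module.Finite.iff_fg.2 hF
  refine Module.Finite.of_surjective ((Ideal.Quotient.mkₐ A I).toLinearMap ∘ₗ g) ?_
  intro y
  obtain ⟨w, rfl⟩ := Ideal.Quotient.mk_surjective y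
  obtain ⟨f, hf, w', hw', he⟩ := h w w.2
  refine ⟨⟨f, hf⟩, ?_⟩
  change Ideal.Quotient.mk I (g ⟨f, hf⟩) = _
  symm
  rw [Ideal.Quotient.eq]
  refine Ideal.mem_span_singleton'.2 ⟨⟨w', hw'⟩, Subtype.ext ?_⟩
  change w' * algebraMap A K x = w - f
  rw [he]; ring

theorem local_finite {x : A} (hx : x ∈ maximalIdeal A) (hx0 : x ≠ 0) :
    Set.Finite {S : Set K | ∃ z, ¬ IsIntegral A z ∧
      (∀ a ∈ maximalIdeal A, IsIntegral A (algebraMap A K a * z)) ∧ PrimeAt A z ∧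
      S = QSet A z} := by
  let C := CRing A K (maximalIdeal A)
  let I : Ideal C := Ideal.span {algebraMap A C x}
  have : Module.Finite A (C ⧸ I) := CRing_quot_finite hx hx0
  have hfin := Algebra.QuasiFinite.finite_primesOver (S := C ⧸ I) (maximalIdeal A)
  have h2 : Set.Finite ((fun q : Ideal (C ⧸ I) =>
    {b : K | IsIntegral A b ∧ ∃ t t' : C, Ideal.Quotient.mk I t ∉ q ∧ Ideal.Quotient.mk I t' ∈ q ∧
      (t : K) * b = t'}) '' ((maximalIdeal A).primesOver (C ⧸ I))) := hfin.image _
  refine h2.subset ?_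
  rintro S ⟨z, hz, hmz, hP, rfl⟩
  have hqp := qIdeal_prime (maximalIdeal A) hz hP
  obtain ⟨hcomap, hmax⟩ := qIdeal_max hz hmz hP
  have hIq : I ≤ qIdeal (maximalIdeal A) z := by
    rw [Ideal.span_singleton_le_iff_mem]
    exact hmz x hx
  have hcm : (Ideal.map (Ideal.Quotient.mk I) (qIdeal (maximalIdeal A) z)).comap
      (Ideal.Quotient.mk I) = qIdeal (maximalIdeal A) z := Ideal.comap_map_mk hIq
  have hmem : ∀ t : C, Ideal.Quotient.mk I t ∈
      Ideal.map (Ideal.Quotient.mk I) (qIdeal (maximalIdeal A) z) ↔ IsIntegral A ((t : K) * z) := by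
    intro t
    rw [← Ideal.mem_comap, hcm]; rfl
  refine ⟨Ideal.map (Ideal.Quotient.mk I) (qIdeal (maximalIdeal A) z), ⟨?_, ⟨?_⟩⟩, ?_⟩
  · exact Ideal.map_isPrime_of_surjective Ideal.Quotient.mk_surjective (by rwa [Ideal.mk_ker])
  · rw [Ideal.under_def, IsScalarTower.algebraMap_eq A C (C ⧸ I), ← Ideal.comap_comap]
    change _ = Ideal.comap _ (Ideal.comap (Ideal.Quotient.mk I) _)
    rw [hcm, hcomap]
  · ext b
    simp only [Set.mem_ofPred_eq, hmem, QSet]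
    refine and_congr_right fun hb => ⟨?_, ?_⟩
    · rintro ⟨t, t', ht, ht', he⟩
      rw [← he] at ht'
      exact (hP t b t.2.1 hb ht').resolve_left ht
    · intro hbz
      obtain ⟨t, htC, htbC, htz, -⟩ := core_t (maximalIdeal A) hz hmz hb
      refine ⟨⟨t, htC⟩, ⟨t * b, htbC⟩, htz, ?_, rfl⟩
      change IsIntegral A (t * b * z)
      rw [mul_assoc]; exact htC.1.mul hbz

theorem local_detect {x : A} (hx : x ∈ maximalIdeal A) (hx0 : x ≠ 0) {y : K}
    (hy : ¬ IsIntegral A y) (hmy : ∀ a ∈ maximalIdeal A, IsIntegral A (algebraMap A K a * y)) :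
    ∃ b, IsIntegral A b ∧ ¬ IsIntegral A (b * y) ∧ PrimeAt A (b * y) := by
  obtain ⟨t, htC, -, hz, hzAg⟩ := core_t (maximalIdeal A) hy hmy (isIntegral_one (R := A) (B := K))
  let C := CRing A K (maximalIdeal A)
  let I : Ideal C := Ideal.span {algebraMap A C x}
  have : Module.Finite A (C ⧸ I) := CRing_quot_finite hx hx0
  have : IsNoetherianRing (C ⧸ I) := IsNoetherianRing.of_finite A (C ⧸ I)
  have hmz : ∀ a ∈ maximalIdeal A, IsIntegral A (algebraMap A K a * (t * y)) := by
    intro a ha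
    rw [mul_left_comm]; exact htC.1.mul (hmy a ha)
  set z := t * y with hzdef
  let J : Ideal C := qIdeal (maximalIdeal A) z
  have hIJ : I ≤ J := by
    rw [Ideal.span_singleton_le_iff_mem]; exact hmz x hx
  let J' : Ideal (C ⧸ I) := J.map (Ideal.Quotient.mk I)
  have hJ' : ∀ d : C, Ideal.Quotient.mk I d ∈ J' ↔ IsIntegral A ((d : K) * z) := by
    intro d
    have hcm : J'.comap (Ideal.Quotient.mk I) = J := Ideal.comap_map_mk hIJ
    rw [← Ideal.mem_comap, hcm]; rfl
  have hne : (Ideal.Quotient.mk J' 1) ≠ 0 := by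
    rw [Ne, Ideal.Quotient.eq_zero_iff_mem]
    intro h1
    have := (hJ' 1).1 (by simpa using h1)
    exact hz (by simpa using this)
  obtain ⟨q', hq', -⟩ := exists_le_isAssociatedPrime_of_isNoetherianRing (C ⧸ I)
    (M := (C ⧸ I) ⧸ J') (Ideal.Quotient.mk J' 1) hne
  rw [isAssociatedPrime_iff] at hq'
  obtain ⟨hq'p, e, he⟩ := hq'
  obtain ⟨e, rfl⟩ := Ideal.Quotient.mk_surjective e
  obtain ⟨c, rfl⟩ := Ideal.Quotient.mk_surjective e
  let q : Ideal C := q'.comap (Ideal.Quotient.mk I)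
  have hqp : q.IsPrime := Ideal.comap_isPrime _ _
  have hq : ∀ d : C, d ∈ q ↔ IsIntegral A ((d : K) * (c * z)) := by
    intro d
    have h1 : d ∈ q ↔ Ideal.Quotient.mk I d ∈ q' := Iff.rfl
    rw [h1, he, Submodule.mem_colon_singleton, Submodule.mem_bot]
    change Ideal.Quotient.mk J' (Ideal.Quotient.mk I d * Ideal.Quotient.mk I c) = 0 ↔ _
    rw [Ideal.Quotient.eq_zero_iff_mem, ← map_mul, hJ']
    change IsIntegral A ((d : K) * c * z) ↔ _
    rw [mul_assoc]
  have hmw : ∀ a ∈ maximalIdeal A, IsIntegral A (algebraMap A K a * (c * z)) := by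
    intro a ha
    rw [mul_left_comm]; exact c.2.1.mul (hmz a ha)
  have hmax := (CRing_max q fun a ha => (hq _).2 (hmw a ha)).2
  have hw : ¬ IsIntegral A (c * z) := by
    intro hw
    apply hqp.ne_top
    rw [Ideal.eq_top_iff_one, hq]; simpa using hw
  refine ⟨c * t, c.2.1.mul htC.1, by rwa [mul_assoc, ← hzdef], ?_⟩
  rw [mul_assoc, ← hzdef]
  have back : ∀ b t : K, IsIntegral A b → (ht : t ∈ C) → (⟨t, ht⟩ : C) ∉ q → 
      IsIntegral A (t * b * (c * z)) → IsIntegral A (b * (c * z)) := by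
    intro b t hb ht htq h
    obtain ⟨s, i, hi, hsi⟩ := hmax.exists_inv htq
    have hsi' : (s : K) * t + i = 1 := congrArg Subtype.val hsi
    have : b * (c * z) = s * (t * b * (c * z)) + b * (i * (c * z)) := by
      linear_combination (-(b * (c * z))) * hsi'
    rw [this]
    exact (s.2.1.mul h).add (hb.mul ((hq i).1 hi))
  intro b b' hb hb' hbb
  obtain ⟨t₁, h1, h1b, h1w, -⟩ := core_t (maximalIdeal A) hw hmw hb
  obtain ⟨t₂, h2, h2b, h2w, -⟩ := core_t (maximalIdeal A) hw hmw hb'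
  have hprod : (⟨t₁ * b, h1b⟩ : C) * ⟨t₂ * b', h2b⟩ ∈ q := by
    rw [hq]
    change IsIntegral A ((t₁ * b) * (t₂ * b') * (c * z))
    have : (t₁ * b) * (t₂ * b') * (c * z) = t₁ * t₂ * (b * b' * (c * z)) := by ring
    rw [this]
    exact (h1.1.mul h2.1).mul hbb
  rcases hqp.mem_or_mem hprod with h | h
  · exact Or.inl (back b t₁ hb h1 (fun h' => h1w ((hq _).1 h')) ((hq _).1 h))
  · exact Or.inr (back b' t₂ hb' h2 (fun h' => h2w ((hq _).1 h')) ((hq _).1 h))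
end

open IsLocalRing
set_option linter.unusedSectionVars false

section
variable {A K : Type*} [CommRing A] [IsDomain A] [IsNoetherianRing A]
    [Field K] [Algebra A K] [IsFractionRing A K]

variable (K) in
/-- localization inside the fraction field -/
noncomputable abbrev LocAt (P : Ideal A) [P.IsPrime] : Subalgebra A K :=
  Localization.subalgebra.ofField K P.primeCompl P.primeCompl_le_nonZeroDivisors

instance LocAt_isLocalRing (P : Ideal A) [P.IsPrime] : IsLocalRing (LocAt K P) :=
  IsLocalization.AtPrime.isLocalRing (LocAt K P) P

instance LocAt_noeth (P : Ideal A) [P.IsPrime] : IsNoetherianRing (LocAt K P) :=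
  IsLocalization.isNoetherianRing P.primeCompl _ inferInstance

theorem primeCompl_ne (P : Ideal A) [P.IsPrime] {s : A} (hs : s ∉ P) : algebraMap A K s ≠ 0 := by
  intro h
  have : s = 0 := by simpa using h
  exact hs (this ▸ P.zero_mem)

theorem inv_mem_LocAt (P : Ideal A) [P.IsPrime] {s : A} (hs : s ∉ P) :
    (algebraMap A K s)⁻¹ ∈ LocAt K P := ⟨1, s, hs, by simp⟩

theorem loc_int (P : Ideal A) [P.IsPrime] {w : K} :
    IsIntegral (LocAt K P) w ↔ ∃ s ∉ P, IsIntegral A (algebraMap A K s * w) := by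
  constructor
  · intro h
    obtain ⟨s, hs⟩ := IsIntegral.exists_multiple_integral_of_isLocalization P.primeCompl w h
    refine ⟨s, s.2, ?_⟩
    rw [Submonoid.smul_def, Algebra.smul_def] at hs
    exact hs
  · rintro ⟨s, hs, h⟩
    have h1 : IsIntegral (LocAt K P) (algebraMap A K s * w) := h.tower_top
    have h2 : IsIntegral (LocAt K P) ((algebraMap A K s)⁻¹) :=
      isIntegral_algebraMap (x := (⟨_, inv_mem_LocAt P hs⟩ : LocAt K P))
    have := h2.mul h1
    rwa [inv_mul_cancel_left₀ (primeCompl_ne P hs)] at this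

theorem loc_max (P : Ideal A) [P.IsPrime] {a : LocAt K P} (ha : a ∈ maximalIdeal (LocAt K P)) :
    ∃ r ∈ P, ∃ s ∉ P, algebraMap A K s * a = algebraMap A K r := by
  obtain ⟨⟨r, s⟩, h⟩ := IsLocalization.surj P.primeCompl a
  have h' : algebraMap A K s * (a : K) = algebraMap A K r := by
    have := congrArg Subtype.val h
    rw [mul_comm]
    exact this
  refine ⟨r, ?_, s, s.2, h'⟩
  rw [← IsLocalization.AtPrime.to_map_mem_maximal_iff (LocAt K P) P r, ← h]
  exact Ideal.mul_mem_right _ _ ha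

theorem loc_mem_max (P : Ideal A) [P.IsPrime] {r : A} (hr : r ∈ P) :
    algebraMap A (LocAt K P) r ∈ maximalIdeal (LocAt K P) :=
  (IsLocalization.AtPrime.to_map_mem_maximal_iff (LocAt K P) P r _).2 hr

/-- colon ideal in the base -/
def pIdeal (A : Type*) {K : Type*} [CommRing A] [Field K] [Algebra A K] (z : K) : Ideal A where
  carrier := {a | IsIntegral A (algebraMap A K a * z)}
  add_mem' := by
    intro a b ha hb
    change IsIntegral A (algebraMap A K (a + b) * z)
    rw [map_add, add_mul]
    exact ha.add hb
  zero_mem' := by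
    change IsIntegral A (algebraMap A K 0 * z)
    rw [map_zero, zero_mul]; exact isIntegral_zero
  smul_mem' := by
    intro a b hb
    change IsIntegral A (algebraMap A K (a * b) * z)
    rw [map_mul, mul_assoc]
    exact isIntegral_algebraMap.mul hb

theorem pIdeal_prime {z : K} (hz : ¬ IsIntegral A z) (hP : PrimeAt A z) : (pIdeal A z).IsPrime where
  ne_top' := fun h => hz (by
    have : (1 : A) ∈ pIdeal A z := h ▸ trivial
    have h2 : IsIntegral A (algebraMap A K 1 * z) := this
    rwa [map_one, one_mul] at h2)
  mem_or_mem' := by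
    intro a b hab
    refine hP (algebraMap A K a) (algebraMap A K b) isIntegral_algebraMap isIntegral_algebraMap ?_
    rw [← map_mul]; exact hab

/-- data transported to the localization -/
theorem loc_data {z : K} (hz : ¬ IsIntegral A z) (hP : PrimeAt A z) [(pIdeal A z).IsPrime] :
    ¬ IsIntegral (LocAt K (pIdeal A z)) z ∧
    (∀ a ∈ maximalIdeal (LocAt K (pIdeal A z)), IsIntegral (LocAt K (pIdeal A z))
      (algebraMap (LocAt K (pIdeal A z)) K a * z)) ∧ PrimeAt (LocAt K (pIdeal A z)) z := by
  refine ⟨?_, ?_, ?_⟩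
  · rw [loc_int]
    rintro ⟨s, hs, h⟩; exact hs h
  · intro a ha
    obtain ⟨r, hr, s, hs, h⟩ := loc_max _ ha
    rw [loc_int]
    refine ⟨s, hs, ?_⟩
    rw [← mul_assoc]
    change IsIntegral A (algebraMap A K s * (a : K) * z)
    rw [h]; exact hr
  · intro b b' hb hb' hbb
    rw [loc_int] at hb hb' hbb ⊢
    rw [loc_int]
    obtain ⟨s, hs, hb⟩ := hb
    obtain ⟨s', hs', hb'⟩ := hb'
    obtain ⟨s'', hs'', hbb⟩ := hbb
    have h1 := hP (algebraMap A K (s'' * s) * b) (algebraMap A K s' * b')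
      (by rw [map_mul, mul_assoc]; exact isIntegral_algebraMap.mul hb) hb' (by
        have := (isIntegral_algebraMap (R := A) (A := K) (x := s * s')).mul hbb
        refine cast (congrArg (IsIntegral A) ?_) this
        simp only [map_mul]; ring)
    have hss : s'' * s ∉ pIdeal A z := fun h => (Ideal.IsPrime.mem_or_mem ‹_› h).elim hs'' hs
    rcases h1 with h | h
    · exact Or.inl ⟨_, hss, by rwa [← mul_assoc]⟩
    · exact Or.inr ⟨_, hs', by rwa [← mul_assoc]⟩

theorem global_fg {x : A} (hx0 : x ≠ 0) {z : K} (hz : ¬ IsIntegral A z)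
    (hxz : IsIntegral A (algebraMap A K x * z)) (hP : PrimeAt A z) :
    ∃ F : Submodule A K, F.FG ∧ (∀ f ∈ F, IsIntegral A f) ∧
      ∀ b, IsIntegral A b → ∃ s : A, ¬ IsIntegral A (algebraMap A K s * z) ∧ ∃ f ∈ F,
        IsIntegral A ((algebraMap A K s * b - f) * z) := by
  have hp := pIdeal_prime hz hP
  set P := pIdeal A z with hPdef
  obtain ⟨h1, h2, h3⟩ := loc_data hz hP
  obtain ⟨F, hF, hFi, h⟩ := local_fg h1 h2 h3 (x := algebraMap A (LocAt K P) x)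
    (loc_mem_max P hxz) (by
      intro h0
      have : algebraMap A K x = 0 := congrArg Subtype.val h0
      exact hx0 (by simpa using this))
  obtain ⟨g, rfl⟩ := hF
  have hg : ∀ f ∈ g, ∃ s : A, s ∉ P ∧ IsIntegral A (algebraMap A K s * f) := by
    intro f hf
    obtain ⟨s, hs⟩ := (loc_int P).1 (hFi f (Submodule.subset_span hf))
    exact ⟨s, hs⟩
  choose! σ hσ hσi using hg
  let F' : Submodule A K := Submodule.span A ((fun f => algebraMap A K (σ f) * f) '' (g : Set K))
  refine ⟨F', Submodule.fg_span (g.finite_toSet.image _), ?_, ?_⟩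
  · intro f hf
    induction hf using Submodule.span_induction with
    | mem x hx => obtain ⟨f, hf, rfl⟩ := hx; exact hσi f hf
    | zero => exact isIntegral_zero
    | add x y _ _ hx hy => exact hx.add hy
    | smul a x _ hx => exact hx.smul a
  · intro b hb
    obtain ⟨f, hf, hbf⟩ := h b hb.tower_top
    have key : ∃ s ∉ P, algebraMap A K s * f ∈ F' := by
      clear hbf
      induction hf using Submodule.span_induction with
      | mem x hx => exact ⟨σ x, hσ x hx, Submodule.subset_span ⟨x, hx, rfl⟩⟩
      | zero => exact ⟨1, fun h => hp.ne_top ((Ideal.eq_top_iff_one _).2 h), by simp⟩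
      | add x y _ _ hx hy =>
        obtain ⟨s, hs, hx⟩ := hx
        obtain ⟨s', hs', hy⟩ := hy
        refine ⟨s * s', fun h => (hp.mem_or_mem h).elim hs hs', ?_⟩
        have := F'.add_mem (F'.smul_mem s' hx) (F'.smul_mem s hy)
        convert this using 1
        simp only [map_mul, Algebra.smul_def]; ring
      | smul a x _ hx =>
        obtain ⟨s, hs, hx⟩ := hx
        obtain ⟨r, s', hs', ha⟩ := a.2
        refine ⟨s * s', fun h => (hp.mem_or_mem h).elim hs hs', ?_⟩
        have := F'.smul_mem r hx
        convert this using 1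
        have hne : algebraMap A K s' ≠ 0 := primeCompl_ne P hs'
        have e1 : a • x = (a : K) * x := rfl
        rw [e1, ha, map_mul, Algebra.smul_def]; field_simp
    obtain ⟨s, hs, hsf⟩ := key
    obtain ⟨s', hs', hi⟩ := (loc_int P).1 hbf
    refine ⟨s * s', fun h => (hp.mem_or_mem (show s * s' ∈ P from h)).elim hs hs', _, F'.smul_mem s' hsf, ?_⟩
    have := (isIntegral_algebraMap (R := A) (A := K) (x := s)).mul hi
    refine cast (congrArg (IsIntegral A) ?_) this
    simp only [map_mul, Algebra.smul_def]; ring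

theorem global_ass {x : A} (hx0 : x ≠ 0) {z : K} (hz : ¬ IsIntegral A z)
    (hxz : IsIntegral A (algebraMap A K x * z)) (hP : PrimeAt A z) :
    pIdeal A z ∈ associatedPrimes A (A ⧸ Ideal.span {x}) := by
  have hp := pIdeal_prime hz hP
  set P := pIdeal A z with hPdef
  obtain ⟨h1, h2, h3⟩ := loc_data hz hP
  obtain ⟨r, hr, har⟩ := L_iv (maximalIdeal (LocAt K P)) h1 h2 (x := algebraMap A (LocAt K P) x)
    (loc_mem_max P hxz) (by
      intro h0
      have : algebraMap A K x = 0 := congrArg Subtype.val h0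
      exact hx0 (by simpa using this))
  obtain ⟨r₀, s₀, hs₀, hr₀⟩ := r.2
  have hs₀K : algebraMap A K s₀ ≠ 0 := primeCompl_ne P hs₀
  -- for `a ∈ P`, some `s ∉ P` has `s * a * r₀ ∈ xA`
  have hspan : ∀ w : LocAt K P, w ∈ Ideal.span {algebraMap A (LocAt K P) x} ↔
      ∃ s ∉ P, ∃ e : A, algebraMap A K s * w = algebraMap A K (e * x) := by
    intro w
    rw [Ideal.mem_span_singleton']
    constructor
    · rintro ⟨v, rfl⟩
      obtain ⟨e, s, hs, hv⟩ := v.2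
      refine ⟨s, hs, e, ?_⟩
      have hsK : algebraMap A K s ≠ 0 := primeCompl_ne P hs
      change algebraMap A K s * ((v : K) * algebraMap A K x) = _
      rw [hv, map_mul]; field_simp
    · rintro ⟨s, hs, e, h⟩
      have hsK : algebraMap A K s ≠ 0 := primeCompl_ne P hs
      refine ⟨⟨algebraMap A K e * (algebraMap A K s)⁻¹, ⟨e, s, hs, rfl⟩⟩, Subtype.ext ?_⟩
      change algebraMap A K e * (algebraMap A K s)⁻¹ * algebraMap A K x = w
      rw [map_mul] at h
      field_simp
      rw [h]
  have hA : ∀ a : A, a ∈ P → ∃ s ∉ P, s * a * r₀ ∈ Ideal.span {x} := by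
    intro a ha
    obtain ⟨s, hs, e, he⟩ := (hspan _).1 (har _ (loc_mem_max P ha))
    refine ⟨s, hs, Ideal.mem_span_singleton'.2 ⟨e * s₀, IsFractionRing.injective A K ?_⟩⟩
    have he' : algebraMap A K s * (algebraMap A K a * (r : K)) = algebraMap A K (e * x) := he
    rw [hr₀] at he'
    simp only [map_mul] at he' ⊢
    field_simp at he'
    linear_combination -he'
  have hall : ∃ s ∉ P, ∀ a ∈ P, s * a * r₀ ∈ Ideal.span {x} := by
    obtain ⟨g, hg⟩ := (isNoetherianRing_iff_ideal_fg A).1 inferInstance P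
    choose! σ hσ hσi using hA
    refine ⟨∏ a ∈ g, σ a, ?_, ?_⟩
    · intro h
      obtain ⟨a, ha, h⟩ := (Ideal.IsPrime.prod_mem_iff (p := P)).1 h
      exact hσ a (hg ▸ Ideal.subset_span ha) h
    · intro a ha
      rw [← hg] at ha
      induction ha using Submodule.span_induction with
      | mem a ha =>
        obtain ⟨d, hd⟩ := Finset.dvd_prod_of_mem σ ha
        rw [hd, show σ a * d * a * r₀ = d * (σ a * a * r₀) by ring]
        exact Ideal.mul_mem_left _ _ (hσi a (hg ▸ Ideal.subset_span ha))
      | zero => simp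
      | add a b _ _ ha hb => rw [mul_add, add_mul]; exact add_mem ha hb
      | smul c a _ ha =>
        rw [smul_eq_mul, show ∀ s : A, s * (c * a) * r₀ = c * (s * a * r₀) by intro s; ring]
        exact Ideal.mul_mem_left _ _ ha
  obtain ⟨s, hs, hall⟩ := hall
  change IsAssociatedPrime _ _
  rw [isAssociatedPrime_iff]
  refine ⟨hp, Ideal.Quotient.mk _ (s * r₀), ?_⟩
  ext a
  rw [Submodule.mem_colon_singleton, Submodule.mem_bot]
  change _ ↔ Ideal.Quotient.mk _ (a * (s * r₀)) = 0
  rw [Ideal.Quotient.eq_zero_iff_mem]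
  constructor
  · intro ha
    have := hall a ha
    rwa [show a * (s * r₀) = s * a * r₀ by ring]
  · intro h
    by_contra ha
    apply hr
    rw [hspan]
    obtain ⟨e, he⟩ := Ideal.mem_span_singleton'.1 h
    refine ⟨a * s * s₀, fun h => (hp.mem_or_mem h).elim
      (fun h => (hp.mem_or_mem h).elim ha hs) hs₀, e, ?_⟩
    rw [hr₀, he]; simp only [map_mul]; field_simp

theorem global_finite {x : A} (hx0 : x ≠ 0) :
    Set.Finite {S : Set K | ∃ z, ¬ IsIntegral A z ∧
      IsIntegral A (algebraMap A K x * z) ∧ PrimeAt A z ∧ S = QSet A z} := by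
  have hfin : (associatedPrimes A (A ⧸ Ideal.span {x})).Finite := associatedPrimes.finite _ _
  have hx0' : ∀ (P : Ideal A) [P.IsPrime], algebraMap A (LocAt K P) x ≠ 0 := by
    intro P _ h0
    have : algebraMap A K x = 0 := congrArg Subtype.val h0
    exact hx0 (by simpa using this)
  refine (hfin.biUnion (t := fun P => {S : Set K | ∃ z, ¬ IsIntegral A z ∧
      IsIntegral A (algebraMap A K x * z) ∧ PrimeAt A z ∧ S = QSet A z ∧ pIdeal A z = P}) ?_).subset ?_
  · intro P hPass
    have hp : P.IsPrime := hPass.1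
    by_cases hxP : x ∈ P
    · have h1 := local_finite (A := LocAt K P) (K := K) (loc_mem_max P hxP) (hx0' P)
      refine (h1.image (fun S => {b | b ∈ S ∧ IsIntegral A b})).subset ?_
      rintro S ⟨z, hz, hxz, hP, rfl, rfl⟩
      obtain ⟨h1, h2, h3⟩ := loc_data hz hP
      refine ⟨_, ⟨z, h1, h2, h3, rfl⟩, ?_⟩
      ext b
      constructor
      · rintro ⟨⟨-, hbz⟩, hb⟩
        obtain ⟨s, hs, h⟩ := (loc_int _).1 hbz
        rw [← mul_assoc] at h
        exact ⟨hb, (hP _ b isIntegral_algebraMap hb h).resolve_left hs⟩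
      · rintro ⟨hb, hbz⟩
        exact ⟨⟨hb.tower_top, hbz.tower_top⟩, hb⟩
    · convert Set.finite_empty
      ext S
      constructor
      · rintro ⟨z, hz, hxz, hP, rfl, rfl⟩
        exact hxP hxz
      · exact False.elim
  · rintro S ⟨z, hz, hxz, hP, rfl⟩
    exact Set.mem_biUnion (global_ass hx0 hz hxz hP) ⟨z, hz, hxz, hP, rfl, rfl⟩

theorem global_detect {x : A} (hx0 : x ≠ 0) {y : K} (hy : ¬ IsIntegral A y)
    (hxy : IsIntegral A (algebraMap A K x * y)) :
    ∃ b, IsIntegral A b ∧ ¬ IsIntegral A (b * y) ∧ PrimeAt A (b * y) := by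
  let 𝒮 : Set (Ideal A) := {I | ∃ b, IsIntegral A b ∧ ¬ IsIntegral A (b * y) ∧ I = pIdeal A (b * y)}
  obtain ⟨(P : Ideal A), ⟨b₁, hb₁, hb₁y, hPeq⟩, hmax⟩ := set_has_maximal_iff_noetherian.2
    (inferInstance : IsNoetherian A A) 𝒮 ⟨_, 1, isIntegral_one, by simpa using hy, rfl⟩
  have hmax' : ∀ b, IsIntegral A b → ¬ IsIntegral A (b * (b₁ * y)) → pIdeal A (b * (b₁ * y)) = P := by
    intro b hb hbn
    by_contra hne
    refine hmax (pIdeal A (b * (b₁ * y))) ⟨b * b₁, hb.mul hb₁, by rwa [mul_assoc], by rw [mul_assoc]⟩ ?_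
    refine lt_of_le_of_ne ?_ (Ne.symm hne)
    intro a ha
    rw [hPeq] at ha
    change IsIntegral A _
    rw [mul_left_comm]
    exact hb.mul ha
  have hp : P.IsPrime := by
    refine ⟨fun h => hb₁y ?_, ?_⟩
    · have : (1 : A) ∈ pIdeal A (b₁ * y) := by rw [← hPeq, h]; trivial
      have h2 : IsIntegral A (algebraMap A K 1 * (b₁ * y)) := this
      rwa [map_one, one_mul] at h2
    · intro a a' h
      by_cases ha : a' ∈ P
      · exact Or.inr ha
      left
      have h1 := hmax' (algebraMap A K a') isIntegral_algebraMap (by rw [hPeq] at ha; exact ha)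
      rw [← h1]
      rw [hPeq] at h
      have h' : IsIntegral A (algebraMap A K (a * a') * (b₁ * y)) := h
      change IsIntegral A _
      rwa [← mul_assoc, ← map_mul]
  have hdes : ∀ b, IsIntegral A b → IsIntegral (LocAt K P) (b * (b₁ * y)) →
      IsIntegral A (b * (b₁ * y)) := by
    intro b hb h
    by_contra hcon
    obtain ⟨s, hs, h⟩ := (loc_int P).1 h
    apply hs
    rw [← hmax' b hb hcon]
    exact h
  have hxP : x ∈ P := by
    rw [hPeq]
    change IsIntegral A _
    rw [mul_left_comm]; exact hb₁.mul hxy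
  obtain ⟨b, hb, hbn, hbP⟩ := local_detect (A := LocAt K P) (K := K) (loc_mem_max P hxP) (by
      intro h0
      have : algebraMap A K x = 0 := congrArg Subtype.val h0
      exact hx0 (by simpa using this)) (y := b₁ * y)
      (fun h => hb₁y (by simpa using hdes 1 isIntegral_one (by simpa using h))) (by
        intro a ha
        obtain ⟨r, hr, s, hs, h⟩ := loc_max _ ha
        rw [loc_int]
        refine ⟨s, hs, ?_⟩
        rw [← mul_assoc]
        change IsIntegral A (algebraMap A K s * (a : K) * _)
        rw [h]; rw [hPeq] at hr; exact hr)
  obtain ⟨s, hs, hsb⟩ := (loc_int P).1 hb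
  have hsK : algebraMap A K s ≠ 0 := primeCompl_ne P hs
  have hsu : IsIntegral (LocAt K P) (algebraMap A K s)⁻¹ :=
      isIntegral_algebraMap (x := (⟨_, inv_mem_LocAt P hs⟩ : LocAt K P))
  refine ⟨algebraMap A K s * b * b₁, hsb.mul hb₁, ?_, ?_⟩
  · intro h
    apply hbn
    have h' : IsIntegral (LocAt K P) (algebraMap A K s * b * b₁ * y) := h.tower_top
    have := hsu.mul h'
    refine cast (congrArg (IsIntegral (LocAt K P)) ?_) this
    field_simp
  · intro c c' hc hc' hcc
    have h' : IsIntegral (LocAt K P) (c * c' * (algebraMap A K s * b * b₁ * y)) := hcc.tower_top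
    have h2 := hsu.mul h'
    rw [show (algebraMap A K s)⁻¹ * (c * c' * (algebraMap A K s * b * b₁ * y)) =
      c * c' * (b * (b₁ * y)) by field_simp] at h2
    have fin : ∀ c, IsIntegral A c → IsIntegral (LocAt K P) (c * (b * (b₁ * y))) →
        IsIntegral A (c * (algebraMap A K s * b * b₁ * y)) := by
      intro c hc h
      rw [show c * (algebraMap A K s * b * b₁ * y) = (c * (algebraMap A K s * b)) * (b₁ * y) by ring]
      apply hdes _ (hc.mul hsb)
      have := (isIntegral_algebraMap (R := A) (A := K) (x := s)).tower_top (A := LocAt K P) |>.mul h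
      refine cast (congrArg (IsIntegral (LocAt K P)) ?_) this
      ring
    rcases hbP c c' hc.tower_top hc'.tower_top h2 with h | h
    · exact Or.inl (fin c hc h)
    · exact Or.inr (fin c' hc' h)
end

open IsLocalRing

theorem noeth_step {R B M : Type*} [CommRing R] [AddCommGroup B] [Module R B]
    [AddCommGroup M] [Module R M] [IsNoetherian R M] (N N' : Submodule R B)
    (hN : IsNoetherian R (B ⧸ N)) (φ : N →ₗ[R] M) (hφ : ∀ n : N, φ n = 0 → (n : B) ∈ N') :
    IsNoetherian R (B ⧸ N') := by
  have h1 : IsNoetherian R (N ⧸ LinearMap.ker φ) :=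
    isNoetherian_of_injective ((LinearMap.ker φ).liftQ φ le_rfl)
      (LinearMap.ker_eq_bot.1 (Submodule.ker_liftQ_eq_bot _ _ _ le_rfl))
  let f : (N ⧸ LinearMap.ker φ) →ₗ[R] (B ⧸ N') :=
    (LinearMap.ker φ).liftQ (N'.mkQ ∘ₗ N.subtype) (by
      intro n hn
      simpa using hφ n hn)
  have h2 : IsNoetherian R ((B ⧸ N') ⧸ LinearMap.range f) := by
    let g : (B ⧸ N) →ₗ[R] ((B ⧸ N') ⧸ LinearMap.range f) :=
      N.liftQ ((LinearMap.range f).mkQ ∘ₗ N'.mkQ) (by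
        intro n hn
        simp only [LinearMap.mem_ker, LinearMap.comp_apply, Submodule.mkQ_apply,
          Submodule.Quotient.mk_eq_zero]
        exact ⟨Submodule.Quotient.mk ⟨n, hn⟩, rfl⟩)
    refine isNoetherian_of_surjective (R := R) (M := B ⧸ N) g ?_
    rw [LinearMap.range_eq_top]
    intro y
    obtain ⟨y, rfl⟩ := Submodule.Quotient.mk_surjective _ y
    obtain ⟨y, rfl⟩ := Submodule.Quotient.mk_surjective _ y
    exact ⟨Submodule.Quotient.mk y, rfl⟩
  exact isNoetherian_of_range_eq_ker f ((LinearMap.range f).mkQ) (by simp)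

theorem noeth_inf {R B ι : Type*} [CommRing R] [AddCommGroup B] [Module R B]
    (N : ι → Submodule R B) (s : Finset ι) (h : ∀ i ∈ s, IsNoetherian R (B ⧸ N i)) :
    IsNoetherian R (B ⧸ s.inf N) := by
  classical
  induction s using Finset.induction_on with
  | empty =>
    rw [Finset.inf_empty]
    have : Subsingleton (B ⧸ (⊤ : Submodule R B)) := by
      refine ⟨fun a b => ?_⟩
      obtain ⟨a, rfl⟩ := Submodule.Quotient.mk_surjective _ a
      obtain ⟨b, rfl⟩ := Submodule.Quotient.mk_surjective _ b
      exact (Submodule.Quotient.eq _).2 trivial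
    infer_instance
  | insert a s ha ih =>
    rw [Finset.inf_insert]
    have h1 := h a (Finset.mem_insert_self _ _)
    have h2 := ih fun i hi => h i (Finset.mem_insert_of_mem hi)
    refine noeth_step (s.inf N) _ h2 ((N a).mkQ ∘ₗ (s.inf N).subtype) ?_
    intro n hn
    refine ⟨?_, n.2⟩
    simpa using hn

section
variable {R A K : Type*} [CommRing R] [CommRing A] [IsDomain A] [IsNoetherianRing A]
    [Field K] [Algebra A K] [IsFractionRing A K] [Algebra R A] [Algebra R K] [IsScalarTower R A K]

/-- colon ideal in the integral closure -/
def Qid (A : Type*) {K : Type*} [CommRing A] [Field K] [Algebra A K] (z : K) :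
    Ideal (integralClosure A K) where
  carrier := {b | IsIntegral A ((b : K) * z)}
  add_mem' := by
    intro a b ha hb
    change IsIntegral A (((a : K) + b) * z)
    rw [add_mul]
    exact IsIntegral.add ha hb
  zero_mem' := by
    change IsIntegral A ((0 : K) * z)
    rw [zero_mul]; exact isIntegral_zero
  smul_mem' := by
    intro a b hb
    change IsIntegral A ((a : K) * b * z)
    rw [mul_assoc]
    exact a.2.mul hb

/-- The filtration. -/
def Fil (R : Type*) {A K : Type*} [CommRing R] [CommRing A] [Field K] [Algebra A K]
    [Algebra R A] [Algebra R K] [IsScalarTower R A K] (z : K) (i : ℕ) :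
    Submodule R (integralClosure A K) where
  carrier := {b | ∀ k ≤ i, IsIntegral A ((b : K) * z ^ k)}
  add_mem' := by
    intro a b ha hb k hk
    change IsIntegral A (((a : K) + b) * z ^ k)
    rw [add_mul]
    exact IsIntegral.add (ha k hk) (hb k hk)
  zero_mem' := by
    intro k _
    change IsIntegral A ((0 : K) * z ^ k)
    rw [zero_mul]; exact isIntegral_zero
  smul_mem' := by
    intro r b hb k hk
    change IsIntegral A ((r • (b : K)) * z ^ k)
    rw [smul_mul_assoc]
    exact IsIntegral.smul r (hb k hk)

theorem Fil_noeth (z : K) (hQ : IsNoetherian R (integralClosure A K ⧸ Qid A z)) (i : ℕ) :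
    IsNoetherian R (integralClosure A K ⧸ Fil R (A := A) z i) := by
  induction i with
  | zero =>
    have : Fil R (A := A) z 0 = ⊤ := by
      rw [eq_top_iff]
      intro b _ k hk
      obtain rfl : k = 0 := by omega
      rw [pow_zero, mul_one]
      exact b.2
    rw [this]
    have : Subsingleton (integralClosure A K ⧸ (⊤ : Submodule R (integralClosure A K))) :=
      by
      refine ⟨fun a b => ?_⟩
      obtain ⟨a, rfl⟩ := Submodule.Quotient.mk_surjective _ a
      obtain ⟨b, rfl⟩ := Submodule.Quotient.mk_surjective _ b
      exact (Submodule.Quotient.eq _).2 trivial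
    infer_instance
  | succ i ih =>
    let μ : Fil R (A := A) z i →ₗ[R] integralClosure A K :=
      { toFun := fun b => ⟨(b : K) * z ^ i, b.2 i le_rfl⟩
        map_add' := fun a b => Subtype.ext (add_mul _ _ _)
        map_smul' := fun r b => Subtype.ext (smul_mul_assoc _ _ _) }
    refine noeth_step (Fil R (A := A) z i) _ ih
      ((Ideal.Quotient.mkₐ R (Qid A z)).toLinearMap ∘ₗ μ) ?_
    intro b hb k hk
    rcases Nat.lt_or_eq_of_le hk with h | rfl
    · exact b.2 k (by omega)
    · have h1 : μ b ∈ Qid A z := Ideal.Quotient.eq_zero_iff_mem.1 hb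
      have h2 : IsIntegral A ((b : K) * z ^ i * z) := h1
      rwa [pow_succ, ← mul_assoc]

theorem filtration {x : A} (hx0 : x ≠ 0)
    (H : ∀ z : K, ¬ IsIntegral A z → IsIntegral A (algebraMap A K x * z) → PrimeAt A z →
      IsNoetherian R (integralClosure A K ⧸ Qid A z)) :
    IsNoetherian R (integralClosure A K ⧸
      Ideal.span {algebraMap A (integralClosure A K) x}) := by
  have hxK : algebraMap A K x ≠ 0 := by simpa using hx0
  have hfin := global_finite (K := K) hx0
  set Y := {S : Set K | ∃ z, ¬ IsIntegral A z ∧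
      IsIntegral A (algebraMap A K x * z) ∧ PrimeAt A z ∧ S = QSet A z} with hY
  have hrep : ∀ S ∈ Y, ∃ z : K, ∃ e : ℕ, (¬ IsIntegral A z ∧
      IsIntegral A (algebraMap A K x * z) ∧ PrimeAt A z ∧ S = QSet A z) ∧
      IsIntegral A (algebraMap A K x * z ^ e) ∧ ¬ IsIntegral A (algebraMap A K x * z ^ (e + 1)) := by
    rintro S ⟨z, hz, h⟩
    classical
    have hex := L1 (A := A) hz hxK
    have hk1 := Nat.find_spec hex
    obtain ⟨j, hj⟩ := Nat.exists_eq_succ_of_ne_zero (n := Nat.find hex) (by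
      intro h0
      rw [h0] at hk1
      exact hk1 (by simpa using isIntegral_algebraMap))
    refine ⟨z, j, ⟨hz, h⟩, ?_, by rwa [hj] at hk1⟩
    by_contra hcon
    exact Nat.find_min hex (m := j) (by omega) hcon
  choose! ζ ε hζ hε hε' using hrep
  let N : Submodule R (integralClosure A K) :=
    hfin.toFinset.inf fun S => Fil R (A := A) (ζ S) (ε S)
  have hN : IsNoetherian R (integralClosure A K ⧸ N) := by
    refine noeth_inf _ _ fun S hS => ?_
    have hS' : S ∈ Y := by simpa using hS
    obtain ⟨h1, h2, h3, -⟩ := hζ S hS'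
    exact Fil_noeth _ (H _ h1 h2 h3) _
  have hle : ∀ b ∈ N, b ∈ Ideal.span {algebraMap A (integralClosure A K) x} := by
    intro b hb
    rw [Ideal.mem_span_singleton']
    by_cases hy : IsIntegral A ((b : K) / algebraMap A K x)
    · exact ⟨⟨_, hy⟩, Subtype.ext (div_mul_cancel₀ _ hxK)⟩
    exfalso
    have hbx : algebraMap A K x * ((b : K) / algebraMap A K x) = b := mul_div_cancel₀ _ hxK
    obtain ⟨b', hb', hw, hwP⟩ := global_detect hx0 hy (by rw [hbx]; exact b.2)
    set w := b' * ((b : K) / algebraMap A K x) with hwdef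
    have hxw : algebraMap A K x * w = b' * b := by rw [hwdef, mul_left_comm, hbx]
    have hS : QSet A w ∈ Y := ⟨w, hw, by rw [hxw]; exact hb'.mul b.2, hwP, rfl⟩
    obtain ⟨h1, h2, h3, h4⟩ := hζ _ hS
    have h5 := hε _ hS
    have h6 := hε' _ hS
    have hbF : b ∈ Fil R (A := A) (ζ (QSet A w)) (ε (QSet A w)) :=
      (Finset.inf_le (f := fun S => Fil R (A := A) (ζ S) (ε S)) (hfin.mem_toFinset.2 hS)) hb
    have h7 := hbF _ le_rfl
    generalize ζ (QSet A w) = z at *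
    generalize ε (QSet A w) = e at *
    have h8 : algebraMap A K x * z ^ e ∈ QSet A w := by
      refine ⟨h5, ?_⟩
      rw [mul_right_comm, hxw, mul_assoc]
      exact hb'.mul h7
    rw [h4] at h8
    apply h6
    rw [pow_succ, ← mul_assoc]
    exact h8.2
  refine isNoetherian_of_surjective (R := R) (M := integralClosure A K ⧸ N)
    (N.liftQ (Ideal.Quotient.mkₐ R _).toLinearMap fun b hb => ?_) ?_
  · exact Ideal.Quotient.eq_zero_iff_mem.2 (hle b hb)
  · rw [LinearMap.range_eq_top]
    intro y
    obtain ⟨y, rfl⟩ := Ideal.Quotient.mk_surjective y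
    exact ⟨Submodule.Quotient.mk y, rfl⟩
end

open IsLocalRing

theorem series_prop {S : Type*} [CommRing S] (m : Ideal S) [IsAdicComplete m S] {r : S}
    (hr : r ∈ m) (a : ℕ → S) : ∃ s : ℕ → S, ∀ n, s n = a n + r * s (n + 1) := by
  let T : ℕ → ℕ → S := fun n N => ∑ i ∈ Finset.range N, r ^ i * a (n + i)
  have hT : ∀ n N, T n (N + 1) = a n + r * T (n + 1) N := by
    intro n N
    simp only [T]
    rw [Finset.sum_range_succ', Finset.mul_sum, add_comm]
    congr 1
    · simp
    · refine Finset.sum_congr rfl fun i _ => ?_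
      rw [show n + (i + 1) = n + 1 + i by omega]; ring
  have hlim : ∀ n, ∃ L, ∀ N, T n N ≡ L [SMOD (m ^ N • ⊤ : Submodule S S)] := by
    intro n
    refine IsPrecomplete.prec' (I := m) (T n) ?_
    intro N N' h
    rw [SModEq.sub_mem]
    rw [← neg_mem_iff, neg_sub]
    simp only [T]
    rw [Finset.sum_range_sub_sum_range h]
    refine sum_mem fun i hi => ?_
    simp only [Finset.mem_filter, Finset.mem_range] at hi
    rw [smul_eq_mul, Ideal.mul_top]
    exact Ideal.mul_mem_right _ _ (Ideal.pow_le_pow_right hi.2 (Ideal.pow_mem_pow hr i))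
  choose s hs using hlim
  refine ⟨s, fun n => ?_⟩
  rw [← sub_eq_zero]
  refine IsHausdorff.haus' (I := m) _ fun N => ?_
  have h1 := hs n (N + 1)
  have h2 := hs (n + 1) N
  rw [SModEq.sub_mem, smul_eq_mul, Ideal.mul_top] at h1 h2
  rw [SModEq.sub_mem, smul_eq_mul, Ideal.mul_top, sub_zero]
  have h1' := Ideal.pow_le_pow_right (Nat.le_succ N) h1
  have : s n - (a n + r * s (n + 1)) = r * (T (n + 1) N - s (n + 1)) - (T n (N + 1) - s n) := by
    rw [hT]; ring
  rw [this]
  exact sub_mem (Ideal.mul_mem_left _ _ h2) h1'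

theorem finite_of_quot {S B : Type*} [CommRing S] (m : Ideal S) [IsAdicComplete m S] {r : S}
    (hr : r ∈ m) [CommRing B] [Algebra S B]
    (hN : IsNoetherian S (B ⧸ Ideal.span {algebraMap S B r}))
    (hB : ∀ b : B, (∀ n, algebraMap S B r ^ n ∣ b) → b = 0) : Module.Finite S B := by
  classical
  obtain ⟨k, g, hg⟩ := Module.Finite.exists_fin (R := S) (M := B ⧸ Ideal.span {algebraMap S B r})
  choose G hG using fun i => Ideal.Quotient.mk_surjective (g i)
  have step : ∀ b : B, ∃ c : Fin k → S, ∃ b' : B, b = ∑ i, c i • G i + algebraMap S B r * b' := by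
    intro b
    have : Ideal.Quotient.mk (Ideal.span {algebraMap S B r}) b ∈ Submodule.span S (Set.range g) := by
      rw [hg]; trivial
    rw [Submodule.mem_span_range_iff_exists_fun] at this
    obtain ⟨c, hc⟩ := this
    have h2 : b - ∑ i, c i • G i ∈ Ideal.span {algebraMap S B r} := by
      rw [← Ideal.Quotient.eq_zero_iff_mem, map_sub, map_sum, sub_eq_zero, ← hc]
      refine Finset.sum_congr rfl fun i _ => ?_
      rw [← hG]; rfl
    rw [Ideal.mem_span_singleton'] at h2
    obtain ⟨b', hb'⟩ := h2
    exact ⟨c, b', by rw [mul_comm, hb']; ring⟩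
  choose c b' hb using step
  refine ⟨⟨(Finset.univ.image G), ?_⟩⟩
  rw [eq_top_iff]
  intro b _
  let β : ℕ → B := fun n => b'^[n] b
  have hβ : ∀ n, β n = ∑ i, c (β n) i • G i + algebraMap S B r * β (n + 1) := by
    intro n
    have := hb (β n)
    simp only [β] at *
    rw [Function.iterate_succ_apply']
    exact this
  choose s hs using fun i => series_prop m hr (fun n => c (β n) i)
  let e : ℕ → B := fun n => β n - ∑ i, s i n • G i
  have he : ∀ n, e n = algebraMap S B r * e (n + 1) := by
    intro n
    simp only [e]
    rw [mul_sub, Finset.mul_sum]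
    have h3 : ∑ i, s i n • G i = ∑ i, c (β n) i • G i
        + ∑ i, algebraMap S B r * s i (n + 1) • G i := by
      rw [← Finset.sum_add_distrib]
      refine Finset.sum_congr rfl fun i _ => ?_
      rw [hs i n, add_smul, mul_smul, Algebra.smul_def r]
    rw [h3]
    nth_rewrite 1 [hβ n]
    ring
  have he' : ∀ n, e 0 = algebraMap S B r ^ n * e n := by
    intro n
    induction n with
    | zero => simp
    | succ n ih => rw [ih, he n, pow_succ]; ring
  have h0 := hB (e 0) fun n => ⟨_, he' n⟩
  have : b = ∑ i, s i 0 • G i := by rw [← sub_eq_zero]; exact h0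
  rw [this]
  refine sum_mem fun i _ => Submodule.smul_mem _ _ (Submodule.subset_span ?_)
  simp
  
theorem fracOf {S E K : Type*} [CommRing S] [CommRing E] [IsDomain E] [Algebra S E] [Field K]
    [Algebra E K] [IsFractionRing E K] (D : Subalgebra S E)
    (hD : ∀ e : E, ∃ d ∈ D, d ≠ 0 ∧ d * e ∈ D) : IsFractionRing D K := by
  have hinj : Function.Injective (algebraMap E K) := IsFractionRing.injective E K
  have hval : ∀ d : D, algebraMap D K d = algebraMap E K d := fun d => rfl
  have hne : ∀ d : E, d ≠ 0 → algebraMap E K d ≠ 0 := fun d hd => by simpa using hd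
  refine (isLocalization_iff _ _).2 ⟨?_, ?_, ?_⟩
  · intro y
    have : (y : D) ≠ 0 := nonZeroDivisors.ne_zero y.2
    rw [hval]
    exact (hne _ (by simpa using this)).isUnit
  · intro z
    obtain ⟨e1, e2, he2, rfl⟩ := IsFractionRing.div_surjective (A := E) z
    obtain ⟨d1, hd1, hd10, h1⟩ := hD e1
    obtain ⟨d2, hd2, hd20, h2⟩ := hD e2
    have he20 : e2 ≠ 0 := nonZeroDivisors.ne_zero he2
    refine ⟨⟨⟨d1 * e1, h1⟩ * ⟨d2, hd2⟩, ⟨⟨d2 * e2, h2⟩ * ⟨d1, hd1⟩, ?_⟩⟩, ?_⟩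
    · refine mem_nonZeroDivisors_of_ne_zero ?_
      intro h0
      have := congrArg Subtype.val h0
      simp [hd10, hd20, he20] at this
    · rw [hval, hval]
      have := hne _ he20
      simp only [MulMemClass.mk_mul_mk, map_mul]
      field_simp
  · intro x y hxy
    refine ⟨1, ?_⟩
    rw [hval, hval] at hxy
    rw [Subtype.ext (hinj hxy)]

theorem finite_E {S E K : Type*} [CommRing S] [IsNoetherianRing S] [CommRing E] [IsDomain E]
    [Algebra S E] [Field K] [Algebra E K] [IsFractionRing E K] [Algebra S K] [IsScalarTower S E K]
    [Algebra.IsIntegral S E] (D : Subalgebra S E)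
    (hf : Module.Finite S (integralClosure D K)) : Module.Finite S E := by
  have hinj : Function.Injective (algebraMap E K) := IsFractionRing.injective E K
  let f : E →ₗ[S] integralClosure D K :=
    { toFun := fun e => ⟨algebraMap E K e, by
        have h := (Algebra.IsIntegral.isIntegral (R := S) e).map (IsScalarTower.toAlgHom S E K)
        exact h.tower_top⟩
      map_add' := fun a b => Subtype.ext (map_add _ _ _)
      map_smul' := fun a b => Subtype.ext (by
        change algebraMap E K (a • b) = a • algebraMap E K b
        rw [Algebra.smul_def, map_mul, ← IsScalarTower.algebraMap_apply, ← Algebra.smul_def]) }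
  exact Module.Finite.of_injective f fun a b h => hinj (congrArg Subtype.val h)

open IsLocalRing

universe u

theorem complete_fin (S : Type u) [CommRing S] [IsNoetherianRing S] [IsLocalRing S]
    [IsAdicComplete (maximalIdeal S) S] (p : Ideal S) :
    ∀ (A K : Type u) [CommRing A] [IsDomain A] [Algebra S A] [Module.Finite S A] [Field K]
    [Algebra A K] [IsFractionRing A K] [Algebra S K] [IsScalarTower S A K],
    RingHom.ker (algebraMap S A) = p → Module.Finite S (integralClosure A K) := by
  induction p using IsNoetherian.induction with
  | hgt p IH =>
  intro A K _ _ _ _ _ _ _ _ _ hker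
  have hAN : IsNoetherianRing A := IsNoetherianRing.of_finite S A
  have hAI : Algebra.IsIntegral S A := Algebra.IsIntegral.of_finite S A
  have hKS : ∀ b : K, IsIntegral A b → IsIntegral S b := fun b hb => isIntegral_trans b hb
  have hBI : Algebra.IsIntegral S (integralClosure A K) := ⟨fun b => by
    have h := hKS b b.2
    exact (isIntegral_algHom_iff (((integralClosure A K).restrictScalars S).val)
      Subtype.val_injective).1 h⟩
  have hkB : RingHom.ker (algebraMap S (integralClosure A K)) = p := by
    rw [← hker]
    ext s
    rw [RingHom.mem_ker, RingHom.mem_ker, IsScalarTower.algebraMap_apply S A (integralClosure A K)]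
    refine ⟨fun h => ?_, fun h => by rw [h, map_zero]⟩
    have h1 : algebraMap A K (algebraMap S A s) = 0 := congrArg Subtype.val h
    simpa using h1
  have hpne : p ≠ ⊤ := by rw [← hker]; exact RingHom.ker_ne_top _
  have hpm : p ≤ maximalIdeal S := le_maximalIdeal hpne
  by_cases hmp : maximalIdeal S ≤ p
  · have hA : IsField A := by
      rw [Ring.isField_iff_maximal_bot]
      refine Ideal.isMaximal_of_isIntegral_of_isMaximal_comap (R := S) ⊥ ?_
      change (RingHom.ker (algebraMap S A)).IsMaximal
      rw [hker, le_antisymm hpm hmp]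
      infer_instance
    refine Module.Finite.of_surjective (M := A)
      (IsScalarTower.toAlgHom S A (integralClosure A K)).toLinearMap ?_
    intro b
    obtain ⟨a1, a2, h2, h⟩ := IsFractionRing.div_surjective (A := A) (b : K)
    obtain ⟨a3, h3⟩ := hA.mul_inv_cancel (nonZeroDivisors.ne_zero h2)
    refine ⟨a1 * a3, Subtype.ext ?_⟩
    change algebraMap A K (a1 * a3) = b
    rw [← h]
    have h4 : algebraMap A K a2 ≠ 0 := by simpa using nonZeroDivisors.ne_zero h2
    rw [eq_div_iff h4, ← map_mul, mul_assoc, mul_comm a3, h3, mul_one]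
  obtain ⟨r, hrm, hrp⟩ := Set.not_subset.1 hmp
  have hx0 : algebraMap S A r ≠ 0 := by
    intro h; apply hrp; rw [← hker]; exact h
  have hxK : algebraMap A K (algebraMap S A r) ≠ 0 := by simpa using hx0
  refine finite_of_quot (maximalIdeal S) hrm ?_ ?_
  · rw [IsScalarTower.algebraMap_apply S A (integralClosure A K)]
    refine filtration hx0 ?_
    intro z hz hxz hP
    obtain ⟨F, ⟨T, rfl⟩, hFi, hF⟩ := global_fg hx0 hz hxz hP
    have hprime : (Qid A z).IsPrime := by
      refine ⟨?_, ?_⟩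
      · rw [Ne, Ideal.eq_top_iff_one]
        intro h
        have h : IsIntegral A ((1 : K) * z) := h
        rw [one_mul] at h
        exact hz h
      · intro a b hab
        exact hP a b a.2 b.2 hab
    let C : Subalgebra A (integralClosure A K) := Algebra.adjoin A {b | (b : K) ∈ T}
    have hfin : {b : integralClosure A K | (b : K) ∈ T}.Finite :=
      T.finite_toSet.preimage Subtype.val_injective.injOn
    have hC : Module.Finite A C := ⟨(Submodule.fg_top _).2
      (fg_adjoin_of_finite hfin fun b _ => Algebra.IsIntegral.isIntegral b)⟩
    have hCS : Module.Finite S C := Module.Finite.trans A C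
    let D : Subalgebra S (integralClosure A K ⧸ Qid A z) :=
      (C.restrictScalars S).map (Ideal.Quotient.mkₐ S (Qid A z))
    have hD : Module.Finite S D := by
      let f : C →ₗ[S] D :=
        { toFun := fun c => ⟨Ideal.Quotient.mk _ (c : integralClosure A K), c, c.2, rfl⟩
          map_add' := fun a b => rfl
          map_smul' := fun a b => rfl }
      refine Module.Finite.of_surjective f ?_
      rintro ⟨_, c, hc, rfl⟩
      exact ⟨⟨c, hc⟩, rfl⟩
    have hTD : ∀ f (hf : f ∈ Submodule.span A (T : Set K)),
        Ideal.Quotient.mk (Qid A z) ⟨f, hFi f hf⟩ ∈ D := by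
      intro f hf
      refine ⟨⟨f, hFi f hf⟩, ?_, rfl⟩
      change _ ∈ C
      have h1 : Submodule.span A (T : Set K) ≤ (C.map (integralClosure A K).val).toSubmodule := by
        rw [Submodule.span_le]
        intro t ht
        exact ⟨⟨t, hFi t (Submodule.subset_span ht)⟩, Algebra.subset_adjoin ht, rfl⟩
      obtain ⟨c, hc, hcf⟩ := h1 hf
      have : c = ⟨f, hFi f hf⟩ := Subtype.ext hcf
      rwa [← this]
    have hcond : ∀ e : integralClosure A K ⧸ Qid A z, ∃ d ∈ D, d ≠ 0 ∧ d * e ∈ D := by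
      intro e
      obtain ⟨b, rfl⟩ := Ideal.Quotient.mk_surjective e
      obtain ⟨s, hs, f, hf, hsf⟩ := hF b b.2
      refine ⟨Ideal.Quotient.mk _ (algebraMap A _ s), ⟨_, C.algebraMap_mem s, rfl⟩, ?_, ?_⟩
      · rw [Ne, Ideal.Quotient.eq_zero_iff_mem]
        exact hs
      · have : Ideal.Quotient.mk (Qid A z) (algebraMap A _ s) * Ideal.Quotient.mk _ b
            = Ideal.Quotient.mk (Qid A z) ⟨f, hFi f hf⟩ := by
          rw [← map_mul, Ideal.Quotient.eq]
          exact hsf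
        rw [this]
        exact hTD f hf
    have hEI : Algebra.IsIntegral S (integralClosure A K ⧸ Qid A z) := ⟨fun e => by
      obtain ⟨b, rfl⟩ := Ideal.Quotient.mk_surjective e
      exact (hBI.isIntegral b).map (Ideal.Quotient.mkₐ S (Qid A z))⟩
    have hDK : IsFractionRing D (FractionRing (integralClosure A K ⧸ Qid A z)) := fracOf D hcond
    have hkD : ∀ s, s ∈ RingHom.ker (algebraMap S D) ↔ algebraMap S (integralClosure A K) s ∈ Qid A z := by
      intro s
      rw [RingHom.mem_ker, ← Ideal.Quotient.eq_zero_iff_mem]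
      exact ⟨fun h => congrArg Subtype.val h, fun h => Subtype.ext h⟩
    have hlt : p < RingHom.ker (algebraMap S D) := by
      rw [SetLike.lt_iff_le_and_exists]
      refine ⟨fun s hs => ?_, r, ?_, hrp⟩
      · rw [hkD]
        rw [← hkB, RingHom.mem_ker] at hs
        rw [hs]
        exact zero_mem _
      · rw [hkD, IsScalarTower.algebraMap_apply S A (integralClosure A K)]
        exact hxz
    have h1 := IH _ hlt D (FractionRing (integralClosure A K ⧸ Qid A z)) rfl
    have h2 := finite_E (S := S) (K := FractionRing (integralClosure A K ⧸ Qid A z)) D h1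
    exact isNoetherian_of_isNoetherianRing_of_finite S _
  · intro b hb
    by_contra hb0
    have hnot : ¬ IsIntegral A (algebraMap A K (algebraMap S A r))⁻¹ := by
      intro hi
      obtain ⟨Q, -, hQ, hQm⟩ := Ideal.exists_ideal_over_prime_of_isIntegral (maximalIdeal S)
        (⊥ : Ideal (integralClosure A K)) (by
          change RingHom.ker (algebraMap S (integralClosure A K)) ≤ _
          rw [hkB]; exact hpm)
      have h1 : algebraMap S (integralClosure A K) r ∈ Q := by
        rw [← Ideal.mem_comap, hQm]; exact hrm
      apply hQ.ne_top
      rw [Ideal.eq_top_iff_one]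
      have h2 := Q.mul_mem_left ⟨_, hi⟩ h1
      have h3 : (⟨_, hi⟩ * algebraMap S (integralClosure A K) r : integralClosure A K) = 1 := by
        rw [IsScalarTower.algebraMap_apply S A (integralClosure A K)]
        exact Subtype.ext (inv_mul_cancel₀ hxK)
      rwa [h3] at h2
    have hbK : (b : K) ≠ 0 := fun h => hb0 (Subtype.ext h)
    obtain ⟨k, hk⟩ := L1 hnot hbK
    obtain ⟨b', hb'⟩ := hb k
    apply hk
    rw [IsScalarTower.algebraMap_apply S A (integralClosure A K)] at hb'
    have h4 : (b : K) = algebraMap A K (algebraMap S A r) ^ k * (b' : K) := congrArg Subtype.val hb'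
    have h5 : (b : K) * (algebraMap A K (algebraMap S A r))⁻¹ ^ k = b' := by
      rw [h4, inv_pow]; field_simp
    rw [h5]
    exact b'.2

open IsLocalRing

theorem adic_surj {A R : Type*} [CommRing A] [CommRing R] (φ : A →+* R)
    (hφ : Function.Surjective φ) (J : Ideal A) (I : Ideal R) (hJ : J.map φ = I) :
    ∃ Φ : AdicCompletion J A →+* AdicCompletion I R, Function.Surjective Φ := by
  have hle : ∀ n, J ^ n ≤ (I ^ n).comap φ := fun n => by
    rw [← Ideal.map_le_iff_le_comap, Ideal.map_pow, hJ]
  let f : ∀ n, AdicCompletion J A →+* R ⧸ I ^ n := fun n =>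
    (Ideal.quotientMap (I ^ n) φ (hle n)).comp (AdicCompletion.evalₐ J n : _ →+* _)
  have hf : ∀ n (a : AdicCompletion.AdicCauchySequence J A),
      f n (AdicCompletion.mk J A a) = Ideal.Quotient.mk (I ^ n) (φ (a.val n)) := by
    intro n a
    have : f n (AdicCompletion.mk J A a)
      = Ideal.quotientMap (I ^ n) φ (hle n) (AdicCompletion.evalₐ J n (AdicCompletion.mk J A a)) := rfl
    rw [this, AdicCompletion.evalₐ_mk, Ideal.quotientMap_mk]
  have hc : ∀ {m n : ℕ} (h : m ≤ n), (Ideal.Quotient.factorPow I h).comp (f n) = f m := by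
    intro m n h
    ext x
    induction x using AdicCompletion.induction_on with
    | h a =>
    rw [RingHom.comp_apply, hf, hf]
    change Ideal.Quotient.mk (I ^ m) _ = _
    rw [Ideal.Quotient.eq, ← map_sub]
    apply hle m
    rw [← Ideal.Quotient.eq]
    exact AdicCompletion.Ideal.mk_eq_mk J h a
  refine ⟨AdicCompletion.liftRingHom I f hc, ?_⟩
  intro y
  induction y using AdicCompletion.induction_on with
  | h b =>
  have hb : ∀ n, ∃ j ∈ J ^ n, φ j = b.val (n + 1) - b.val n := by
    intro n
    have h1 : b.val (n + 1) - b.val n ∈ (J ^ n).map φ := by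
      rw [Ideal.map_pow, hJ, ← Ideal.Quotient.eq]
      exact AdicCompletion.Ideal.mk_eq_mk I (Nat.le_succ n) b
    rw [Ideal.mem_map_iff_of_surjective φ hφ] at h1
    exact h1
  choose j hj hjb using hb
  obtain ⟨a0, ha0⟩ := hφ (b.val 0)
  let a : ℕ → A := fun n => a0 + ∑ i ∈ Finset.range n, j i
  have ha : ∀ n, φ (a n) = b.val n := by
    intro n
    simp only [a]
    induction n with
    | zero => simpa using ha0
    | succ n ih => rw [Finset.sum_range_succ, ← add_assoc, map_add, ih, hjb]; ring
  refine ⟨AdicCompletion.mk J A (AdicCompletion.AdicCauchySequence.mk J A a ?_), ?_⟩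
  · intro n
    symm
    rw [SModEq.sub_mem, smul_eq_mul, Ideal.mul_top]
    simp only [a]
    rw [Finset.sum_range_succ]
    have : a0 + (∑ i ∈ Finset.range n, j i + j n) - (a0 + ∑ i ∈ Finset.range n, j i) = j n := by ring
    rw [this]
    exact hj n
  · apply AdicCompletion.ext_evalₐ
    intro n
    rw [AdicCompletion.evalₐ_liftRingHom, hf, AdicCompletion.evalₐ_mk]
    exact congrArg _ (ha n)

theorem adic_noeth (R : Type*) [CommRing R] [IsNoetherianRing R] (I : Ideal R) :
    IsNoetherianRing (AdicCompletion I R) := by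
  obtain ⟨T, hT⟩ := (isNoetherianRing_iff_ideal_fg R).1 inferInstance I
  let φ : MvPolynomial T R →+* R := (MvPolynomial.aeval (fun t : T => (t : R)) : _ →ₐ[R] R)
  obtain ⟨Φ, hΦ⟩ := adic_surj φ (fun r => ⟨MvPolynomial.C r, by simp [φ]⟩)
    (MvPolynomial.idealOfVars T R) I (by
      rw [MvPolynomial.idealOfVars, Ideal.map_span, ← hT]
      congr 1
      ext t
      constructor
      · rintro ⟨_, ⟨t, rfl⟩, rfl⟩
        simp [φ]
      · intro ht
        exact ⟨_, ⟨⟨t, ht⟩, rfl⟩, by simp [φ]⟩)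
  have h1 := isNoetherianRing_of_ringEquiv (MvPowerSeries T R)
    (MvPowerSeries.toAdicCompletionAlgEquiv T R).toRingEquiv
  exact isNoetherianRing_of_surjective _ _ Φ hΦ

open IsLocalRing

theorem prime_cond (S : Type) [CommRing S] [IsNoetherianRing S] [IsLocalRing S]
    [IsAdicComplete (maximalIdeal S) S] (P : Ideal S) (hPmin : P ∈ minimalPrimes S) :
    ∃ c : S, c ∉ P ∧ ∀ a b : S, ∀ hb : b ∈ nonZeroDivisors S,
      IsIntegral S (IsLocalization.mk' (FractionRing S) a (⟨b, hb⟩ : nonZeroDivisors S)) →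
      ∃ r : S, c * a - r * b ∈ P := by
  have hP : P.IsPrime := hPmin.1.1
  let A := S ⧸ P
  let K := FractionRing A
  have hf := complete_fin S P A K (by
    exact Ideal.mk_ker)
  have hfA : Module.Finite A (integralClosure A K) := Module.Finite.of_restrictScalars_finite S _ _
  obtain ⟨c, hc0, hc⟩ := exists_denom (A := A) (K := K) (integralClosure A K).toSubmodule
    (Module.Finite.iff_fg.1 hfA)
  obtain ⟨c, rfl⟩ := Ideal.Quotient.mk_surjective c
  refine ⟨c, fun h => hc0 (Ideal.Quotient.eq_zero_iff_mem.2 h), fun a b hb hint => ?_⟩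
  have hbP : ∀ b ∈ nonZeroDivisors S, b ∉ P := fun b hb hbP => by
    exact Set.disjoint_left.1 (Ideal.disjoint_nonZeroDivisors_of_mem_minimalPrimes hPmin) hbP hb
  have hunit : ∀ y : nonZeroDivisors S, IsUnit (algebraMap S K y) := by
    intro y
    have h1 : Ideal.Quotient.mk P y ≠ 0 := fun h =>
      hbP y y.2 (Ideal.Quotient.eq_zero_iff_mem.1 h)
    have h2 : algebraMap A K (Ideal.Quotient.mk P y) ≠ 0 := by
      rw [Ne, FaithfulSMul.algebraMap_eq_zero_iff]; exact h1
    exact h2.isUnit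
  let g : FractionRing S →ₐ[S] K := IsLocalization.liftAlgHom (M := nonZeroDivisors S)
    (f := Algebra.ofId S K) hunit
  have h1 : IsIntegral A (g (IsLocalization.mk' (FractionRing S) a (⟨b, hb⟩ : nonZeroDivisors S))) :=
    (hint.map g).tower_top
  obtain ⟨r, hr⟩ := hc _ h1
  obtain ⟨r, rfl⟩ := Ideal.Quotient.mk_surjective r
  refine ⟨r, ?_⟩
  have h2 : g (IsLocalization.mk' (FractionRing S) a (⟨b, hb⟩ : nonZeroDivisors S)) * algebraMap S K b
      = algebraMap S K a := by
    rw [← g.commutes b, ← g.commutes a, ← map_mul]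
    congr 1
    exact IsLocalization.mk'_spec (FractionRing S) a (⟨b, hb⟩ : nonZeroDivisors S)
  have h3 : algebraMap A K (Ideal.Quotient.mk P (c * a)) = algebraMap A K (Ideal.Quotient.mk P (r * b)) := by
    rw [map_mul, map_mul, map_mul, map_mul, hr]
    change _ * algebraMap S K a = _ * algebraMap S K b
    rw [← h2]; ring
  have h4 := IsFractionRing.injective A K h3
  exact Ideal.Quotient.eq.1 h4

theorem reduced_cond (S : Type) [CommRing S] [IsNoetherianRing S] [IsLocalRing S]
    [IsAdicComplete (maximalIdeal S) S] [IsReduced S] :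
    ∃ c ∈ nonZeroDivisors S, ∀ a b : S, ∀ hb : b ∈ nonZeroDivisors S,
      IsIntegral S (IsLocalization.mk' (FractionRing S) a (⟨b, hb⟩ : nonZeroDivisors S)) →
      ∃ r : S, r * b = c * a := by
  classical
  have hfin := minimalPrimes.finite_of_isNoetherianRing S
  set M := hfin.toFinset with hM
  have hMm : ∀ P, P ∈ M ↔ P ∈ minimalPrimes S := fun P => by simp [hM]
  have hzero : ∀ t : S, (∀ P ∈ M, t ∈ P) → t = 0 := by
    intro t ht
    have : t ∈ nilradical S := by
      rw [nilradical, ← Ideal.sInf_minimalPrimes, Submodule.mem_sInf]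
      intro P hP
      exact ht P ((hMm P).2 hP)
    rw [nilradical_eq_zero] at this
    exact this
  choose! γ hγ hγ' using prime_cond S
  have hd : ∀ P ∈ M, ∃ d : S, d ∉ P ∧ ∀ Q ∈ M, Q ≠ P → d ∈ Q := by
    intro P hP
    have hPm := (hMm P).1 hP
    by_contra! hcon
    have : (M.erase P).inf id ≤ P := by
      intro d hd
      by_contra hdP
      obtain ⟨Q, hQ, hQP, hdQ⟩ := hcon d hdP
      exact hdQ ((Finset.inf_le (f := id) (Finset.mem_erase.2 ⟨hQP, hQ⟩)) hd)
    obtain ⟨Q, hQ, hQP⟩ := (Ideal.IsPrime.inf_le' hPm.1.1).1 this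
    rw [Finset.mem_erase] at hQ
    exact hQ.1 (le_antisymm hQP (hPm.2 ((hMm Q).1 hQ.2).1 hQP))
  choose! δ hδ hδ' using hd
  let c := ∑ P ∈ M, δ P * γ P
  have hcP : ∀ P ∈ M, c ∉ P := by
    intro P hP hc
    have hPm := (hMm P).1 hP
    rw [show c = _ from (Finset.add_sum_erase M (fun P => δ P * γ P) hP).symm] at hc
    have h1 : ∑ Q ∈ M.erase P, δ Q * γ Q ∈ P := sum_mem fun Q hQ => by
      rw [Finset.mem_erase] at hQ
      exact Ideal.mul_mem_right _ _ (hδ' Q hQ.2 P hP hQ.1.symm)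
    rcases hPm.1.1.mem_or_mem ((Ideal.add_mem_iff_left _ h1).1 hc) with h | h
    · exact hδ P hP h
    · exact hγ P hPm h
  refine ⟨c, ?_, ?_⟩
  · rw [mem_nonZeroDivisors_iff_right]
    intro t ht
    refine hzero t fun P hP => ?_
    have : t * c ∈ P := by rw [ht]; exact zero_mem _
    exact (((hMm P).1 hP).1.1.mem_or_mem this).resolve_right (hcP P hP)
  · intro a b hb hint
    choose! ρ hρ using fun P hP => hγ' P hP a b hb hint
    refine ⟨∑ P ∈ M, δ P * ρ P, ?_⟩
    rw [Finset.sum_mul, Finset.sum_mul]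
    refine Finset.sum_congr rfl fun P hP => ?_
    rw [← sub_eq_zero]
    refine hzero _ fun Q hQ => ?_
    by_cases hQP : Q = P
    · subst hQP
      have := hρ Q ((hMm Q).1 hQ)
      have h2 := Q.mul_mem_left (-δ Q) this
      convert h2 using 1
      ring
    · have := hδ' P hP Q hQ hQP
      have h2 := Q.mul_mem_right (ρ P * b - γ P * a) this
      convert h2 using 1
      ring

open IsLocalRing

theorem descent (R S : Type) [CommRing R] [CommRing S] [IsNoetherianRing S] [Algebra R S]
    [Module.FaithfullyFlat R S] (c : S) (hc : c ∈ nonZeroDivisors S)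
    (h : ∀ a b : S, ∀ hb : b ∈ nonZeroDivisors S,
      IsIntegral S (IsLocalization.mk' (FractionRing S) a (⟨b, hb⟩ : nonZeroDivisors S)) →
      ∃ r : S, r * b = c * a) :
    ∃ d ∈ nonZeroDivisors R, ∀ y : FractionRing R, IsIntegral R y →
      ∃ r : R, algebraMap R (FractionRing R) r = algebraMap R (FractionRing R) d * y := by
  classical
  set K := FractionRing R with hK
  set Q := FractionRing S with hQ
  have hreg : ∀ b ∈ nonZeroDivisors R, algebraMap R S b ∈ nonZeroDivisors S := by
    intro b hb
    have h1 : IsSMulRegular S b := Module.Flat.isSMulRegular_of_nonZeroDivisors hb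
    rw [mem_nonZeroDivisors_iff_right]
    intro t ht
    apply h1
    simp only [Algebra.smul_def, mul_zero]
    rw [mul_comm]; exact ht
  have hunit : ∀ y : nonZeroDivisors R, IsUnit (Algebra.ofId R Q y) := by
    intro y
    have := IsLocalization.map_units (M := nonZeroDivisors S) Q ⟨_, hreg y y.2⟩
    exact this
  let ι : K →ₐ[R] Q := IsLocalization.liftAlgHom (M := nonZeroDivisors R)
    (f := Algebra.ofId R Q) hunit
  have hinjQ : Function.Injective (algebraMap S Q) := IsFractionRing.injective S Q
  have key : ∀ y : K, IsIntegral R y → ∃ s : S, algebraMap S Q s = algebraMap S Q c * ι y := by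
    intro y hy
    obtain ⟨a, b, rfl⟩ := IsLocalization.exists_mk'_eq (nonZeroDivisors R) y
    have h2 : ι (IsLocalization.mk' K a b) =
        IsLocalization.mk' Q (algebraMap R S a) (⟨_, hreg b b.2⟩ : nonZeroDivisors S) := by
      rw [IsLocalization.eq_mk'_iff_mul_eq]
      change _ * algebraMap S Q (algebraMap R S b) = _
      rw [← IsScalarTower.algebraMap_apply R S Q, ← IsScalarTower.algebraMap_apply R S Q,
        ← ι.commutes, ← ι.commutes, ← map_mul, IsLocalization.mk'_spec]
    have h3 : IsIntegral S (ι (IsLocalization.mk' K a b)) := (hy.map ι).tower_top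
    rw [h2] at h3 ⊢
    obtain ⟨r, hr⟩ := h _ _ _ h3
    refine ⟨r, ?_⟩
    have hbu := IsLocalization.map_units (M := nonZeroDivisors S) Q ⟨_, hreg b b.2⟩
    apply hbu.mul_right_cancel
    rw [mul_assoc, IsLocalization.mk'_spec, ← map_mul, ← map_mul]
    exact congrArg _ hr
  let T : Set S := {s | ∃ y : K, IsIntegral R y ∧ algebraMap S Q s = algebraMap S Q c * ι y}
  obtain ⟨G, hGT, hG⟩ := (Submodule.fg_span_iff_fg_span_finset_subset T).1
    (IsNoetherian.noetherian (Submodule.span S T))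
  have hGT' : ∀ s ∈ G, ∃ y : K, IsIntegral R y ∧ algebraMap S Q s = algebraMap S Q c * ι y :=
    fun s hs => hGT hs
  choose! Y hYi hY using hGT'
  obtain ⟨d, hd⟩ := IsLocalization.exist_integer_multiples_of_finset (nonZeroDivisors R) (G.image Y)
  refine ⟨d, d.2, fun y hy => ?_⟩
  obtain ⟨s, hs⟩ := key y hy
  have hsT : s ∈ Submodule.span S (G : Set S) := by
    rw [← hG]; exact Submodule.subset_span ⟨y, hy, hs⟩
  rw [Submodule.mem_span_finset] at hsT
  obtain ⟨t, -, ht⟩ := hsT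
  have hcu : IsUnit (algebraMap S Q c) := IsLocalization.map_units (M := nonZeroDivisors S) Q ⟨c, hc⟩
  have h4 : ι y = ∑ g ∈ G, algebraMap S Q (t g) * ι (Y g) := by
    apply hcu.mul_left_cancel
    rw [← hs, ← ht, map_sum, Finset.mul_sum]
    refine Finset.sum_congr rfl fun g hg => ?_
    rw [smul_eq_mul, map_mul, hY g hg]; ring
  obtain ⟨b, hb⟩ := IsLocalization.exist_integer_multiples_of_finset (nonZeroDivisors R)
    (insert y (G.image Y))
  have hb' : ∀ g ∈ G, ∃ a : R, algebraMap R K a = (b : R) • Y g := fun g hg =>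
    hb _ (Finset.mem_insert_of_mem (Finset.mem_image_of_mem _ hg))
  choose! α hα using hb'
  obtain ⟨a, ha⟩ := hb y (Finset.mem_insert_self _ _)
  have h5 : algebraMap R S a = ∑ g ∈ G, t g * algebraMap R S (α g) := by
    apply hinjQ
    rw [map_sum, ← IsScalarTower.algebraMap_apply R S Q, ← ι.commutes, ha, map_smul, h4,
      Finset.smul_sum]
    refine Finset.sum_congr rfl fun g hg => ?_
    rw [map_mul, ← IsScalarTower.algebraMap_apply R S Q, ← ι.commutes, hα g hg, map_smul,
      mul_smul_comm]
  have h6 : a ∈ Ideal.span (α '' (G : Set S)) := by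
    rw [← Ideal.comap_map_eq_self_of_faithfullyFlat (B := S) (Ideal.span _), Ideal.mem_comap, h5]
    refine sum_mem fun g hg => Ideal.mul_mem_left _ _ (Ideal.mem_map_of_mem _ ?_)
    exact Ideal.subset_span ⟨g, hg, rfl⟩
  have h7 : ∀ w ∈ Ideal.span (α '' (G : Set S)), ∃ r : R,
      algebraMap R K b * algebraMap R K r = algebraMap R K d * algebraMap R K w := by
    intro w hw
    induction hw using Submodule.span_induction with
    | mem x hx =>
      obtain ⟨g, hg, rfl⟩ := hx
      obtain ⟨r, hr⟩ := hd (Y g) (Finset.mem_image_of_mem _ hg)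
      refine ⟨r, ?_⟩
      rw [hα g hg, hr]
      change algebraMap R K b * ((d : R) • Y g) = _
      rw [Algebra.smul_def, Algebra.smul_def]; ring
    | zero => exact ⟨0, by simp⟩
    | add x y _ _ hx hy =>
      obtain ⟨r, hr⟩ := hx
      obtain ⟨r', hr'⟩ := hy
      exact ⟨r + r', by rw [map_add, map_add, mul_add, hr, hr', mul_add]⟩
    | smul a x _ hx =>
      obtain ⟨r, hr⟩ := hx
      exact ⟨a * r, by rw [smul_eq_mul, map_mul, map_mul, mul_left_comm, hr]; ring⟩
  obtain ⟨r, hr⟩ := h7 a h6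
  refine ⟨r, ?_⟩
  have hbu : IsUnit (algebraMap R K b) := IsLocalization.map_units (M := nonZeroDivisors R) K b
  apply hbu.mul_left_cancel
  rw [hr, ha, Algebra.smul_def]; ring

theorem finite_conductor (R : Type) [CommRing R] [IsLocalRing R] [IsNoetherianRing R]
    (hau : IsReduced (AdicCompletion (maximalIdeal R) R)) :
    IsReduced R ∧ ∃ d ∈ nonZeroDivisors R, ∀ y : FractionRing R, IsIntegral R y →
      ∃ r : R, algebraMap R (FractionRing R) r = algebraMap R (FractionRing R) d * y := by
  have h1 : IsNoetherianRing (AdicCompletion (maximalIdeal R) R) := adic_noeth R _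
  have h2 : Module.FaithfullyFlat R (AdicCompletion (maximalIdeal R) R) :=
    Module.FaithfullyFlat.of_flat_of_isLocalHom
  obtain ⟨c, hc, h⟩ := reduced_cond (AdicCompletion (maximalIdeal R) R)
  refine ⟨?_, descent R _ c hc h⟩
  exact isReduced_of_injective (algebraMap R (AdicCompletion (maximalIdeal R) R))
    (FaithfulSMul.algebraMap_injective _ _)

open CategoryTheory in
theorem pdlt_of_ext (R : Type) [CommRing R] (X : ModuleCat.{0} R) (n : ℕ)
    (h : ∀ (N : ModuleCat.{0} R) (i : ℕ), n < i →
    Subsingleton ↥(((Ext R (ModuleCat.{0} R) i).obj (Opposite.op X)).obj N)) :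
    HasProjectiveDimensionLT X (n+1) := by
  refine HasProjectiveDimensionLT.mk fun i hi Y e => ?_
  let P := (HasProjectiveResolution.out (Z := X)).some
  obtain ⟨j, rfl⟩ : ∃ j, i = j + 1 := ⟨i - 1, by omega⟩
  obtain ⟨f, hf, rfl⟩ := P.extMk_surjective e (j+1+1) rfl
  rw [P.extMk_eq_zero_iff _ _ _ _ j rfl]
  have h1 := h Y (j+1) (by omega)
  have h2 : Limits.IsZero ((P.complex.linearYonedaObj R Y).homology (j+1)) :=
    (ModuleCat.isZero_of_subsingleton _).of_iso (P.isoExt (R := R) (j+1) Y).symm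
  rw [← HomologicalComplex.exactAt_iff_isZero_homology,
    HomologicalComplex.exactAt_iff' _ j (j+1) (j+1+1) (by simp) (by simp),
    ShortComplex.moduleCat_exact_iff] at h2
  exact h2 f hf

open CategoryTheory IsLocalRing in
theorem free_of_pd (A : Type) [CommRing A] [IsLocalRing A] [IsNoetherianRing A]
    (s b : A) (hs : s ∈ nonZeroDivisors A) (hb : ¬ s ∣ b)
    (hm : ∀ a ∈ maximalIdeal A, s ∣ a * b) (n : ℕ) :
    ∀ (M : Type) [AddCommGroup M] [Module A M] [Module.Finite A M]
      (_ : ∀ x : M, s • x = 0 → x = 0)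
      (_ : HasProjectiveDimensionLT (ModuleCat.of A M) (n+1)), Module.Free A M := by
  induction n with
  | zero =>
    intro M _ _ _ _ h
    rw [← projective_iff_hasProjectiveDimensionLT_one, ← IsProjective.iff_projective] at h
    exact Module.free_of_flat_of_isLocalRing
  | succ n ih =>
    intro M _ _ _ ht h
    have hex : ∃ k : ℕ, ∃ f : (Fin k → A) →ₗ[A] M, Function.Surjective f :=
      Module.Finite.exists_fin' A M
    classical
    obtain ⟨f, hf⟩ := Nat.find_spec hex
    have hmin := fun k hk => Nat.find_min hex (m := k) hk
    generalize Nat.find hex = k at f hf hmin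
    have hker : ∀ v, f v = 0 → ∀ i, v i ∈ maximalIdeal A := by
      intro v hv i
      by_contra hu
      have hu : IsUnit (v i) := by simpa using hu
      obtain ⟨u, hu⟩ := hu
      obtain ⟨k, rfl⟩ : ∃ j, k = j + 1 := ⟨k - 1, by have := i.2; omega⟩
      refine hmin k (by omega) ⟨Fintype.linearCombination A
        (fun j => f (Pi.single (i.succAbove j) 1)), ?_⟩
      rw [← LinearMap.range_eq_top, Fintype.range_linearCombination, eq_top_iff]
      intro x _
      obtain ⟨w, rfl⟩ := hf x
      have e1 : ∀ w : Fin (k+1) → A, f w = w i • f (Pi.single i 1) +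
          ∑ j, w (i.succAbove j) • f (Pi.single (i.succAbove j) 1) := by
        intro w
        conv_lhs => rw [pi_eq_sum_univ' w]
        rw [map_sum, Fin.sum_univ_succAbove _ i]
        simp
      set N := Submodule.span A (Set.range fun j => f (Pi.single (i.succAbove j) 1)) with hN
      have hsum : ∀ w : Fin (k+1) → A, ∑ j, w (i.succAbove j) • f (Pi.single (i.succAbove j) 1) ∈ N :=
        fun w => N.sum_mem fun j _ => N.smul_mem _ (Submodule.subset_span ⟨j, rfl⟩)
      have e2 : f (Pi.single i 1) ∈ N := by
        have := e1 v
        rw [hv, ← hu] at this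
        have h3 : (u : A) • f (Pi.single i 1) ∈ N := by
          rw [eq_neg_of_add_eq_zero_left this.symm]
          exact N.neg_mem (hsum v)
        have := N.smul_mem (↑u⁻¹ : A) h3
        rwa [smul_smul, Units.inv_mul, one_smul] at this
      rw [e1 w]
      exact N.add_mem (N.smul_mem _ e2) (hsum w)
    have hS := LinearMap.shortExact_shortComplexKer hf
    have hp : Projective f.shortComplexKer.X₂ := by
      rw [← IsProjective.iff_projective]
      change Module.Projective A (Fin k → A)
      infer_instance
    have hK := (hS.hasProjectiveDimensionLT_X₃_iff n hp).1 h
    have hst : ∀ (x : Fin k → A), s • x = 0 → x = 0 := by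
      intro x hx
      funext i
      have := congrFun hx i
      exact (mem_nonZeroDivisors_iff.1 hs).1 _ this
    have hfree : Module.Free A (LinearMap.ker f) :=
      ih (LinearMap.ker f) (fun x hx => Subtype.ext (hst _ (congrArg Subtype.val hx))) hK
    have hbs : ∀ v : LinearMap.ker f, ∃ w : LinearMap.ker f, b • v = s • w := by
      rintro ⟨v, hv⟩
      choose w hw using fun i => hm (v i) (hker v hv i)
      have e : b • v = s • w := by
        funext i
        simpa [mul_comm] using hw i
      refine ⟨⟨w, ?_⟩, Subtype.ext e⟩
      apply ht
      rw [← map_smul, ← e, map_smul, hv, smul_zero]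
    have hsub : Subsingleton (LinearMap.ker f) := by
      by_contra hne
      rw [not_subsingleton_iff_nontrivial] at hne
      let B := Module.Free.chooseBasis A (LinearMap.ker f)
      have : Nonempty (Module.Free.ChooseBasisIndex A (LinearMap.ker f)) := B.index_nonempty
      obtain ⟨i⟩ := this
      obtain ⟨w, hw⟩ := hbs (B i)
      have := congrArg (fun z => B.repr z i) hw
      simp at this
      exact hb ⟨_, this⟩
    have hinj : Function.Injective f := by
      rw [← LinearMap.ker_eq_bot]
      exact Submodule.subsingleton_iff_eq_bot.1 hsub
    exact Module.Free.of_equiv (LinearEquiv.ofBijective f ⟨hinj, hf⟩)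

open CategoryTheory IsLocalRing in
theorem core_pd (R : Type) [CommRing R] [IsNoetherianRing R] (C : Ideal R) (n : ℕ)
    (hpd : HasProjectiveDimensionLT (ModuleCat.of R C) (n+1))
    (d : R) (hd : d ∈ nonZeroDivisors R) (hdC : d ∈ C) (s a : R) (hs : s ∈ nonZeroDivisors R)
    (hC : ∀ r : R, ∀ c ∈ C, ∃ c' ∈ C, (r * a) * c = s * c') : s ∣ a := by
  by_contra hsa
  let I := Ideal.span {s}
  let x : R ⧸ I := Ideal.Quotient.mk I a
  have hx : x ≠ 0 := fun h => hsa (Ideal.mem_span_singleton.1 (Ideal.Quotient.eq_zero_iff_mem.1 h))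
  obtain ⟨p, hp, hle⟩ := exists_le_isAssociatedPrime_of_isNoetherianRing R
    (⟨x, Submodule.mem_span_singleton_self x⟩ : Submodule.span R {x})
    (fun h => hx (congrArg Subtype.val h))
  rw [isAssociatedPrime_iff] at hp
  obtain ⟨hpp, ⟨y, hy⟩, hpy⟩ := hp
  obtain ⟨r, rfl⟩ := Submodule.mem_span_singleton.1 hy
  obtain ⟨b, hbdef⟩ : ∃ b, b = r * a := ⟨_, rfl⟩
  have hmem : ∀ t : R, t ∈ p ↔ s ∣ t * b := by
    intro t
    rw [hpy, Submodule.mem_colon_singleton, Submodule.mem_bot, ← Subtype.coe_inj]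
    change t • r • x = 0 ↔ _
    have : t • r • x = Ideal.Quotient.mk I (t * b) := by
      simp [x, Algebra.smul_def, hbdef]
    rw [this, Ideal.Quotient.eq_zero_iff_mem, Ideal.mem_span_singleton]
  let S := p.primeCompl
  let A := Localization S
  have : IsNoetherianRing A := IsLocalization.isNoetherianRing S A inferInstance
  let _ : IsLocalRing A := inferInstanceAs (IsLocalRing (Localization.AtPrime p))
  let φ := algebraMap R A
  have hsA : φ s ∈ nonZeroDivisors A := IsLocalization.map_nonZeroDivisors_le S A ⟨s, hs, rfl⟩
  have hdA : φ d ∈ nonZeroDivisors A := IsLocalization.map_nonZeroDivisors_le S A ⟨d, hd, rfl⟩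
  have hbA : ¬ φ s ∣ φ b := by
    rintro ⟨z, hz⟩
    obtain ⟨⟨w, t⟩, hw⟩ := IsLocalization.surj S z
    have : φ (b * t) = φ (s * w) := by
      simp only at hw
      rw [map_mul, map_mul, hz]
      linear_combination φ s * hw
    obtain ⟨t', ht'⟩ := (IsLocalization.eq_iff_exists S A).1 this
    have h1 : (t' * t : R) ∈ p := by
      rw [hmem]
      exact ⟨t' * w, by linear_combination ht'⟩
    exact (t' * t).2 h1
  have hmA : ∀ z ∈ maximalIdeal A, φ s ∣ z * φ b := by
    intro z hz
    obtain ⟨⟨w, t⟩, hw⟩ := IsLocalization.surj S z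
    have hwp : w ∈ p := by
      rw [← IsLocalization.AtPrime.to_map_mem_maximal_iff A p w inferInstance]
      change φ w ∈ _
      rw [← hw]
      exact Ideal.mul_mem_right _ _ hz
    obtain ⟨q, hq⟩ := (hmem w).1 hwp
    have hu : IsUnit (φ t) := IsLocalization.map_units A t
    rw [← hu.dvd_mul_right]
    refine ⟨φ q, ?_⟩
    simp only at hw
    rw [← map_mul, ← hq, map_mul]
    linear_combination φ b * hw
  have : Small.{0} R := inferInstance
  let M := (ModuleCat.of R C).localizedModule S
  let g : C →ₗ[R] M := (ModuleCat.of R C).localizedModuleMkLinearMap S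
  have hg : IsLocalizedModule S g := 
    ModuleCat.localizedModule_isLocalizedModule (ModuleCat.of R C) S
  have hpdM : HasProjectiveDimensionLT (ModuleCat.of A M) (n+1) := 
    ModuleCat.localizedModule_hasProjectiveDimensionLE n S (ModuleCat.of R C)
  have hst : IsScalarTower R A M :=
    inferInstanceAs (IsScalarTower R (Localization S) ((ModuleCat.of R C).localizedModule S))
  have hfin : Module.Finite A M := Module.Finite.of_isLocalizedModule S g
  have htf : ∀ e : R, e ∈ nonZeroDivisors R → ∀ z : M, φ e • z = 0 → z = 0 := by
    intro e he z hz
    obtain ⟨⟨c, t⟩, hc⟩ := IsLocalizedModule.surj S g z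
    have h1 : g (e • c) = 0 := by
      rw [map_smul, ← hc]
      change e • (t : R) • z = 0
      rw [smul_comm, ← algebraMap_smul A e z, hz, smul_zero]
    rw [IsLocalizedModule.eq_zero_iff S g] at h1
    obtain ⟨t', ht'⟩ := h1
    have h2 : t' • c = 0 := by
      apply Subtype.ext
      have := congrArg Subtype.val ht'
      change (t' : R) * (e * c) = 0 at this
      change (t' : R) * c = 0
      exact (mem_nonZeroDivisors_iff.1 he).1 _ (by rw [← this]; ring)
    have h3 : g c = 0 := (IsLocalizedModule.eq_zero_iff S g).2 ⟨t', h2⟩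
    rw [h3] at hc
    exact IsLocalizedModule.smul_injective g t (hc.trans (smul_zero t).symm)
  have hfree : Module.Free A M := free_of_pd A (φ s) (φ b) hsA hbA hmA n M (htf s hs) hpdM
  have hnt : Nontrivial M := by
    refine ⟨g ⟨d, hdC⟩, 0, fun h => ?_⟩
    rw [IsLocalizedModule.eq_zero_iff S g] at h
    obtain ⟨t, ht⟩ := h
    have : (t : R) * d = 0 := congrArg Subtype.val ht
    have := (mem_nonZeroDivisors_iff.1 hd).2 _ this
    exact t.2 (by rw [this]; exact p.zero_mem)
  let B := Module.Free.chooseBasis A M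
  obtain ⟨i⟩ : Nonempty (Module.Free.ChooseBasisIndex A M) := B.index_nonempty
  have hbs : ∀ z : M, ∃ w : M, φ b • z = φ s • w := by
    intro z
    obtain ⟨⟨c, t⟩, hc⟩ := IsLocalizedModule.surj S g z
    obtain ⟨c', hc', h⟩ := hC r c c.2
    have hu : IsUnit (φ t) := IsLocalization.map_units A t
    obtain ⟨u, hu⟩ := hu
    have h1 : φ b • φ t • z = φ s • g ⟨c', hc'⟩ := by
      simp only [φ, algebraMap_smul]
      change b • t • z = _
      rw [hc, ← map_smul, ← map_smul]
      congr 1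
      exact Subtype.ext (by rw [hbdef]; exact h)
    refine ⟨(↑u⁻¹ : A) • g ⟨c', hc'⟩, ?_⟩
    rw [smul_comm, ← h1, ← hu, smul_comm (φ b), smul_smul, Units.inv_mul, one_smul]
  obtain ⟨w, hw⟩ := hbs (B i)
  have := congrArg (fun z => B.repr z i) hw
  simp at this
  exact hbA ⟨_, this⟩

theorem mem_conductorIdeal_iff_aux (R : Type) [CommRing R] (r : R) : r ∈ conductorIdeal R ↔
    ∀ y : FractionRing R, IsIntegral R y → ∃ q : R,
      algebraMap R (FractionRing R) q = algebraMap R (FractionRing R) r * y := by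
  unfold conductorIdeal
  rw [Module.mem_annihilator]
  constructor
  · intro h y hy
    have := h (Submodule.Quotient.mk (⟨y, hy⟩ : IntClosure R))
    rw [← Submodule.Quotient.mk_smul, Submodule.Quotient.mk_eq_zero] at this
    obtain ⟨q, hq⟩ := this
    have hq := congrArg Subtype.val hq
    refine ⟨q, hq.trans ?_⟩
    change r • y = _
    rw [Algebra.smul_def]
  · intro h m
    obtain ⟨⟨y, hy⟩, rfl⟩ := Submodule.Quotient.mk_surjective _ m
    obtain ⟨q, hq⟩ := h y hy
    rw [← Submodule.Quotient.mk_smul, Submodule.Quotient.mk_eq_zero]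
    refine ⟨q, Subtype.ext (hq.trans ?_)⟩
    change _ = r • y
    rw [Algebra.smul_def]

-- STATEMENT 0
theorem stmt0 (R : Type) [CommRing R] [IsLocalRing R] [IsNoetherianRing R]
    (hau : AnalyticallyUnramified R)
    (hpd : HasFiniteProjDim R ↥(conductorIdeal R)) :
    IsNormalRing R := by
  obtain ⟨hred, d, hd, hdi⟩ := finite_conductor R hau
  refine ⟨hred, ?_⟩
  obtain ⟨n, hn⟩ := hpd
  have hpd' := pdlt_of_ext R (ModuleCat.of R (conductorIdeal R)) n hn
  rw [eq_bot_iff]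
  intro y hy
  obtain ⟨a, s, rfl⟩ := IsLocalization.exists_mk'_eq (nonZeroDivisors R) y
  have hy' : IsIntegral R (IsLocalization.mk' (FractionRing R) a s) := hy
  have hdvd : (s : R) ∣ a := by
    refine core_pd R (conductorIdeal R) n hpd' d hd ((mem_conductorIdeal_iff_aux R d).2 hdi) s a s.2 ?_
    intro r c hc
    rw [mem_conductorIdeal_iff_aux] at hc
    have hr : IsIntegral R (algebraMap R (FractionRing R) r *
        IsLocalization.mk' (FractionRing R) a s) := isIntegral_algebraMap.mul hy'
    obtain ⟨c', hc'⟩ := hc _ hr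
    refine ⟨c', (mem_conductorIdeal_iff_aux R c').2 fun z hz => ?_, ?_⟩
    · obtain ⟨q, hq⟩ := hc _ (hr.mul hz)
      exact ⟨q, by rw [hq, hc']; ring⟩
    · apply IsFractionRing.injective R (FractionRing R)
      have e := IsLocalization.mk'_spec (FractionRing R) a s
      simp only [map_mul]
      rw [hc']
      linear_combination -(algebraMap R (FractionRing R) r * algebraMap R (FractionRing R) c) * e
  obtain ⟨q, hq⟩ := hdvd
  rw [Algebra.mem_bot]
  refine ⟨q, ?_⟩
  rw [IsLocalization.eq_mk'_iff_mul_eq, hq, map_mul, mul_comm]
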